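/- Under Conditions (A)–(D) with b_j ≠ 0 for all j ≥ 1, denote by ζ_k(u) the occupation measure k⁻¹ Σ_{n=0}^{k−1} δ_{u_n} of the trajectory issued from the deterministic point u ∈ 𝒜, and by 𝜻_k(u) = k⁻¹ Σ_{n=0}^{k−1} δ_{(u_j, j ≥ n)} the corresponding measures on 𝐇 = H^{ℤ₊}. Then the uniform large deviation principle holds for the families {ζ_k(u), u ∈ 𝒜} and {𝜻_k(u), u ∈ 𝒜} with the good rate functions I and 𝐈 of the non-uniform LDPs: for every Borel Γ, −I(int Γ) ≤ liminf_{k→∞} k⁻¹ log inf_{u∈𝒜} ℙ{ζ_k(u) ∈ Γ} ≤ limsup_{k→∞} k⁻¹ log sup_{u∈𝒜} ℙ{ζ_k(u) ∈ Γ} ≤ −I(cl Γ), where I(Λ) = inf_{σ∈Λ} I(σ), and similarly for 𝜻_k(u) with 𝐈. -/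

import Mathlib

open MeasureTheory ProbabilityTheory Filter Topology BoundedContinuousFunction
open scoped ENNReal NNReal Pointwise

noncomputable section

/-- The sets `𝒜_k(B)`: `𝒜_0(B) = B`, `𝒜_k(B) = S(𝒜_{k-1}(B)) + 𝒦`. -/
def attain {H : Type*} [AddCommGroup H] (S : H → H) (K : Set H) (B : Set H) : ℕ → Set H
  | 0 => B
  | n + 1 => S '' attain S K B n + K

/-- The domain of attainability `𝒜(B)` from `B`: the closure of `⋃_k 𝒜_k(B)`. -/
def attainDom {H : Type*} [AddCommGroup H] [TopologicalSpace H]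
    (S : H → H) (K : Set H) (B : Set H) : Set H :=
  closure (⋃ n, attain S K B n)

variable {H : Type} [NormedAddCommGroup H] [InnerProductSpace ℝ H] [CompleteSpace H]

/-- The orthogonal projection `𝖯_N` onto the span of the first `N` vectors of an orthonormal
basis. -/
def projB (e : HilbertBasis ℕ ℝ H) (N : ℕ) (u : H) : H :=
  ∑ j ∈ Finset.range N, e.repr u j • (e j : H)

/-- Condition (A): regularity and stability. -/
def CondA (S : H → H) : Prop :=
  ContDiff ℝ 1 S ∧
  ∀ R r : ℝ, 0 < r → r < R →
    ∃ C : ℝ, 0 < C ∧ ∃ a : ℝ, 0 < a ∧ a < 1 ∧ ∃ n₀ : ℕ, 1 ≤ n₀ ∧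
      (∀ u₁ ∈ Metric.closedBall (0 : H) R, ∀ u₂ ∈ Metric.closedBall (0 : H) R,
          ‖S u₁ - S u₂‖ ≤ C * ‖u₁ - u₂‖) ∧
      ∀ u ∈ Metric.closedBall (0 : H) R, ∀ n : ℕ, n₀ ≤ n →
          ‖S^[n] u‖ ≤ max (a * ‖u‖) r

/-- Condition (B): dissipativity. -/
def CondB (S : H → H) (K : Set H) : Prop :=
  ∃ ρ : ℝ, 0 < ρ ∧ ∃ k₀ : ℝ → ℕ, Monotone k₀ ∧
    ∀ R : ℝ, 0 ≤ R → ∀ k : ℕ, k₀ R ≤ k →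
      attain S K (Metric.closedBall 0 R) k ⊆ Metric.closedBall (0 : H) ρ

/-- Condition (C): squeezing. -/
def CondC (S : H → H) (e : HilbertBasis ℕ ℝ H) : Prop :=
  ∀ R : ℝ, 0 < R → ∃ γ : ℕ → ℝ, (∀ N, 0 < γ N) ∧ Antitone γ ∧
    Tendsto γ atTop (𝓝 0) ∧
    ∀ N : ℕ, ∀ u₁ ∈ Metric.closedBall (0 : H) R, ∀ u₂ ∈ Metric.closedBall (0 : H) R,
      ‖(S u₁ - S u₂) - projB e N (S u₁ - S u₂)‖ ≤ γ N * ‖u₁ - u₂‖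

/-- Condition (D): structure of the noise, `η_k = ∑_j b_j ξ_{jk} e_j` with `∑ b_j² < ∞`,
independent scalar `ξ_{jk}` whose laws have Lipschitz densities `p_j` with `p_j(0) > 0` and
support in `[-1,1]`. -/
def CondD [MeasurableSpace H] {Ω : Type*} [MeasurableSpace Ω] (P : Measure Ω)
    (e : HilbertBasis ℕ ℝ H) (η : ℕ → Ω → H)
    (b : ℕ → ℝ) (ξ : ℕ → ℕ → Ω → ℝ) (p : ℕ → ℝ → ℝ) : Prop :=
  (∀ j, 0 ≤ b j) ∧ Summable (fun j => (b j) ^ 2) ∧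
  (∀ k ω, HasSum (fun j => (b j * ξ j k ω) • (e j : H)) (η k ω)) ∧
  (∀ j k, Measurable (ξ j k)) ∧
  iIndepFun (fun jk : ℕ × ℕ => ξ jk.1 jk.2) P ∧
  (∀ j k, Measure.map (ξ j k) P
      = (volume : Measure ℝ).withDensity fun x => ENNReal.ofReal (p j x)) ∧
  (∀ j, ∃ L : ℝ≥0, LipschitzWith L (p j)) ∧
  (∀ j, 0 < p j 0) ∧
  (∀ j, Function.support (p j) ⊆ Set.Icc (-1 : ℝ) 1)

/-- The trajectory `u_k = S(u_{k-1}) + η_k` of the random dynamical system issued from `u₀`. -/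
def traj {Ω : Type*} (S : H → H) (η : ℕ → Ω → H) (u₀ : Ω → H) : ℕ → Ω → H
  | 0 => u₀
  | k + 1 => fun ω => S (traj S η u₀ k ω) + η (k + 1) ω

/-- The (topological) support of a measure. -/
def msupp {X : Type*} [TopologicalSpace X] [MeasurableSpace X] (μ : Measure X) : Set X :=
  {x | ∀ U ∈ 𝓝 x, 0 < μ U}

/-- The occupation measures `ζ_k = k⁻¹ ∑_{n=0}^{k-1} δ_{x_n}` of a sequence. -/
def occ {X : Type*} [MeasurableSpace X] (x : ℕ → X) (k : ℕ) : ProbabilityMeasure X :=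
  if hk : k = 0 then ⟨Measure.dirac (x 0), Measure.dirac.isProbabilityMeasure⟩
  else
    ⟨(k : ℝ≥0∞)⁻¹ • ∑ n ∈ Finset.range k, Measure.dirac (x n), by
      refine ⟨?_⟩
      simp only [Measure.smul_apply, Measure.finset_sum_apply, measure_univ,
        Finset.sum_const, Finset.card_range, nsmul_eq_mul, mul_one, smul_eq_mul]
      exact ENNReal.inv_mul_cancel (Nat.cast_ne_zero.mpr hk) (ENNReal.natCast_ne_top k)⟩

/-- Large deviation principle for the sequence of events `prob k` (the laws of random
probability measures in `Z`), with rate function `I`. -/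
def LDPof {Z : Type*} [TopologicalSpace Z] (prob : ℕ → Set Z → ℝ≥0∞) (I : Z → ℝ≥0∞) : Prop :=
  (∀ F : Set Z, IsClosed F →
    Filter.limsup (fun k : ℕ => (((k : ℝ)⁻¹ : ℝ) : EReal) * ENNReal.log (prob k F)) atTop
      ≤ -(⨅ σ ∈ F, (I σ : EReal))) ∧
  (∀ G : Set Z, IsOpen G →
    -(⨅ σ ∈ G, (I σ : EReal))
      ≤ Filter.liminf (fun k : ℕ => (((k : ℝ)⁻¹ : ℝ) : EReal) * ENNReal.log (prob k G)) atTop)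

/-- A good rate function: lower semicontinuous with compact level sets. -/
def GoodRate {Z : Type*} [TopologicalSpace Z] (I : Z → ℝ≥0∞) : Prop :=
  LowerSemicontinuous I ∧ ∀ c : ℝ≥0∞, c ≠ ⊤ → IsCompact {σ : Z | I σ ≤ c}

/-- Uniform large deviation principle for a family of random probability measures indexed by
initial points: for every `Γ`, `-I(int Γ) ≤ liminf k⁻¹ log inf_u ℙ{ζ_k(u) ∈ Γ}` and
`limsup k⁻¹ log sup_u ℙ{ζ_k(u) ∈ Γ} ≤ -I(cl Γ)`. -/
def UnifLDPof {Z : Type*} [TopologicalSpace Z]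
    (probInf probSup : ℕ → Set Z → ℝ≥0∞) (I : Z → ℝ≥0∞) : Prop :=
  ∀ Γ : Set Z,
    (-(⨅ σ ∈ interior Γ, (I σ : EReal))
        ≤ Filter.liminf
            (fun k : ℕ => (((k : ℝ)⁻¹ : ℝ) : EReal) * ENNReal.log (probInf k Γ)) atTop) ∧
    (Filter.limsup
        (fun k : ℕ => (((k : ℝ)⁻¹ : ℝ) : EReal) * ENNReal.log (probSup k Γ)) atTop
      ≤ -(⨅ σ ∈ closure Γ, (I σ : EReal)))

set_option linter.unusedSectionVars false
set_option linter.unusedVariables false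

/-- exponential in ENNReal -/
def ex (x : ℝ) : ℝ≥0∞ := ENNReal.ofReal (Real.exp x)

lemma ex_add (x y : ℝ) : ex (x + y) = ex x * ex y := by
  unfold ex; rw [Real.exp_add, ENNReal.ofReal_mul (Real.exp_pos x).le]

lemma ex_le {x y : ℝ} : ex x ≤ ex y ↔ x ≤ y := by
  unfold ex; rw [ENNReal.ofReal_le_ofReal_iff (Real.exp_pos y).le, Real.exp_le_exp]

lemma ex_zero : ex 0 = 1 := by simp [ex]

lemma ex_ne_top (x : ℝ) : ex x ≠ ⊤ := ENNReal.ofReal_ne_top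

lemma ex_pos (x : ℝ) : 0 < ex x := by simp [ex, Real.exp_pos]

lemma ex_mul_neg (x : ℝ) : ex x * ex (-x) = 1 := by rw [← ex_add]; simp [ex_zero]

lemma ex_exists {a : ℝ≥0∞} (h0 : a ≠ 0) (h1 : a ≠ ⊤) : ∃ x, a = ex x := by
  refine ⟨Real.log a.toReal, ?_⟩
  unfold ex
  rw [Real.exp_log (ENNReal.toReal_pos h0 h1), ENNReal.ofReal_toReal h1]

/-- trajectory driven by a noise sequence -/
def pth (S : H → H) (u : H) (y : ℕ → H) : ℕ → H
  | 0 => u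
  | n + 1 => S (pth S u y n) + y n

/-- prepend a point -/
def cns (u : H) (x : ℕ → H) : ℕ → H
  | 0 => u
  | n + 1 => x n

lemma pth_succ (S : H → H) (u : H) (y : ℕ → H) (n : ℕ) :
    pth S u y (n + 1) = pth S (S u + y 0) (fun n => y (n + 1)) n := by
  induction n with
  | zero => rfl
  | succ n ih => rw [pth, ih]; rfl

lemma pth_cns (S : H → H) (u : H) (y : ℕ → H) :
    pth S u y = cns u (pth S (S u + y 0) (fun n => y (n + 1))) := by
  funext n
  cases n with
  | zero => rfl
  | succ n => exact pth_succ S u y n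

lemma cns_cont : Continuous (fun p : H × (ℕ → H) => cns p.1 p.2) := by
  refine continuous_pi fun n => ?_
  cases n with
  | zero => exact continuous_fst
  | succ n => exact (continuous_apply n).comp continuous_snd

lemma pth_cont {S : H → H} (hS : Continuous S) :
    Continuous (fun p : H × (ℕ → H) => pth S p.1 p.2) := by
  refine continuous_pi fun n => ?_
  induction n with
  | zero => exact continuous_fst
  | succ n ih =>
    exact (hS.comp ih).add ((continuous_apply n).comp continuous_snd)

/-- reachability -/
def Reach [MeasurableSpace H] (S : H → H) (μ : Measure H) : ℕ → H → H → Prop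
  | 0, v, w => v = w
  | n + 1, v, w => ∃ h ∈ msupp μ, Reach S μ n (S v + h) w

/-- abstract chain hypotheses -/
structure MC [MeasurableSpace H] (S : H → H) (μ : Measure H) (ν : Measure (ℕ → H))
    (A : Set H) : Prop where
  cont : Continuous S
  comp : IsCompact A
  ne : A.Nonempty
  shift : ν.map (fun y => (y 0, fun n => y (n + 1))) = μ.prod ν
  inv : ∀ u ∈ A, ∀ᵐ h ∂μ, S u + h ∈ A
  cpl : ∀ q : ℝ, 0 < q → ∃ C : ℝ, 0 ≤ C ∧ ∀ u ∈ A, ∀ u' ∈ A, ∃ Δ : H,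
    ‖S u - Δ - S u'‖ ≤ q * ‖u - u'‖ ∧ ∀ (M : ℝ≥0∞) (φ : H → ℝ≥0∞), (∀ h, φ h ≤ M) →
      ∫⁻ h, φ h ∂μ ≤ ∫⁻ h, φ (h - Δ) ∂μ + ENNReal.ofReal (C * ‖u - u'‖) * M
  irr : ∀ v ∈ A, ∀ u ∈ A, ∀ δ : ℝ, 0 < δ → ∃ n w, Reach S μ n v w ∧ ‖w - u‖ < δ

/-- expectation of a path functional -/
def JJ [MeasurableSpace H] (S : H → H) (ν : Measure (ℕ → H)) (u : H)
    (g : (ℕ → H) → ℝ≥0∞) : ℝ≥0∞ := ∫⁻ y, g (pth S u y) ∂ν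

section chain
variable [SecondCountableTopology H] [MeasurableSpace H] [BorelSpace H]
  {S : H → H} {μ : Measure H} {ν : Measure (ℕ → H)} {A : Set H}

lemma meas_cns (u : H) : Measurable (cns u) :=
  (cns_cont.comp (Continuous.prodMk continuous_const continuous_id)).measurable

lemma markov [IsProbabilityMeasure μ] [IsProbabilityMeasure ν] (hC : MC S μ ν A) (u : H)
    {g : (ℕ → H) → ℝ≥0∞} (hg : Measurable g) :
    JJ S ν u g = ∫⁻ h, JJ S ν (S u + h) (fun x => g (cns u x)) ∂μ := by
  have hm : Measurable (fun p : H × (ℕ → H) => g (cns u (pth S (S u + p.1) p.2))) := by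
    refine hg.comp ((meas_cns u).comp ?_)
    refine Continuous.measurable ?_
    exact (pth_cont hC.cont).comp
      (Continuous.prodMk (continuous_const.add continuous_fst) continuous_snd)
  unfold JJ
  rw [← lintegral_prod (fun p : H × (ℕ → H) => g (cns u (pth S (S u + p.1) p.2)))
    hm.aemeasurable, ← hC.shift, lintegral_map hm]
  · simp_rw [pth_cns S u]
  · exact Measurable.prodMk (measurable_pi_apply 0)
      (measurable_pi_lambda _ fun n => measurable_pi_apply (n + 1))

lemma JJ_mono_ae {u : H} {g g' : (ℕ → H) → ℝ≥0∞} (h : ∀ᵐ y ∂ν, g (pth S u y) ≤ g' (pth S u y)) :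
    JJ S ν u g ≤ JJ S ν u g' := lintegral_mono_ae h

lemma path_mem [IsProbabilityMeasure μ] [IsProbabilityMeasure ν] (hC : MC S μ ν A) {u : H}
    (hu : u ∈ A) : ∀ᵐ y ∂ν, ∀ n, pth S u y n ∈ A := by
  rw [ae_all_iff]
  have hA : MeasurableSet A := hC.comp.measurableSet
  have key : ∀ n : ℕ, ∀ u ∈ A, JJ S ν u ({x : ℕ → H | x n ∈ Aᶜ}.indicator 1) = 0 := by
    intro n
    induction n with
    | zero =>
      intro u hu
      unfold JJ
      simp [Set.indicator, pth, hu]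
    | succ n ih =>
      intro u hu
      have hm : MeasurableSet {x : ℕ → H | x (n+1) ∈ Aᶜ} := measurable_pi_apply (n+1) hA.compl
      rw [markov hC u (measurable_one.indicator hm)]
      rw [lintegral_congr_ae (g := fun _ => 0)]
      · simp
      · filter_upwards [hC.inv u hu] with h hh
        exact ih _ hh
  intro n
  have := key n u hu
  unfold JJ at this
  rw [lintegral_eq_zero_iff] at this
  · filter_upwards [this] with y hy
    by_contra hcon
    simp [Set.indicator, hcon] at hy
  · have hm : MeasurableSet {x : ℕ → H | x n ∈ Aᶜ} := measurable_pi_apply n hA.compl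
    refine (measurable_one.indicator hm).comp ?_
    exact ((pth_cont hC.cont).comp (Continuous.prodMk continuous_const continuous_id)).measurable

lemma JJ_mono [IsProbabilityMeasure μ] [IsProbabilityMeasure ν] (hC : MC S μ ν A) {u : H}
    (hu : u ∈ A) {g g' : (ℕ → H) → ℝ≥0∞}
    (h : ∀ x : ℕ → H, (∀ n, x n ∈ A) → g x ≤ g' x) : JJ S ν u g ≤ JJ S ν u g' := by
  apply JJ_mono_ae
  filter_upwards [path_mem hC hu] with y hy using h _ hy

lemma JJ_const_mul {u : H} {g : (ℕ → H) → ℝ≥0∞} {c : ℝ≥0∞} (hc : c ≠ ⊤) :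
    JJ S ν u (fun x => c * g x) = c * JJ S ν u g := by
  unfold JJ; rw [lintegral_const_mul' _ _ hc]

lemma cns_mem {u : H} (hu : u ∈ A) {x : ℕ → H} (hx : ∀ n, x n ∈ A) : ∀ n, cns u x n ∈ A := by
  intro n
  cases n with
  | zero => exact hu
  | succ n => exact hx n

lemma coupling [IsProbabilityMeasure μ] [IsProbabilityMeasure ν] (hC : MC S μ ν A)
    {q C : ℝ} (hq : 0 < q) (hC0 : 0 ≤ C)
    (hcpl : ∀ u ∈ A, ∀ u' ∈ A, ∃ Δ : H,
      ‖S u - Δ - S u'‖ ≤ q * ‖u - u'‖ ∧ ∀ (M : ℝ≥0∞) (φ : H → ℝ≥0∞), (∀ h, φ h ≤ M) →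
      ∫⁻ h, φ h ∂μ ≤ ∫⁻ h, φ (h - Δ) ∂μ + ENNReal.ofReal (C * ‖u - u'‖) * M)
    {G : (ℕ → H) → ℝ≥0∞} {B M : ℝ≥0∞} (hB : B ≠ ⊤)
    (hG : ∀ v ∈ A, ∀ x : ℕ → H, (∀ n, x n ∈ A) → G (cns v x) ≤ B * G x)
    (hM : ∀ v ∈ A, JJ S ν v G ≤ M) (hqB : 2 * ENNReal.ofReal q * B ≤ 1) (E : ℝ)
    (n : ℕ) : ∀ (δ : ℝ) (D : ℝ≥0∞) (g g' : (ℕ → H) → ℝ≥0∞), 0 ≤ δ → D ≠ ⊤ →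
      Measurable g → Measurable g' →
      (∀ x : ℕ → H, (∀ n, x n ∈ A) → g x ≤ D * G x) →
      (∀ x x' : ℕ → H, (∀ n, x n ∈ A) → (∀ n, x' n ∈ A) →
        (∀ j ≤ n, ‖x j - x' j‖ ≤ q ^ j * δ) → g x ≤ ex E * g' x') →
      ∀ u ∈ A, ∀ u' ∈ A, ‖u - u'‖ ≤ δ →
        JJ S ν u g ≤ ex E * JJ S ν u' g' + 2 * ENNReal.ofReal (C * δ) * B * D * M := by
  induction n with
  | zero =>
    intro δ D g g' hδ hD hg hg' hgD hgg u hu u' hu' huu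
    refine le_trans ?_ le_self_add
    rw [← JJ_const_mul (ex_ne_top E)]
    unfold JJ
    refine lintegral_mono_ae ?_
    filter_upwards [path_mem hC hu, path_mem hC hu'] with y hy hy'
    refine hgg _ _ hy hy' ?_
    intro j hj
    obtain rfl : j = 0 := by omega
    simpa [pth] using huu
  | succ n ih =>
    intro δ D g g' hδ hD hg hg' hgD hgg u hu u' hu' huu
    obtain ⟨Δ, hΔ, hφ⟩ := hcpl u hu u' hu'
    classical
    let φ : H → ℝ≥0∞ := fun h => if S u + h ∈ A then JJ S ν (S u + h) (fun x => g (cns u x)) else 0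
    have hgu : ∀ x : ℕ → H, (∀ n, x n ∈ A) → g (cns u x) ≤ (D * B) * G x := by
      intro x hx
      calc g (cns u x) ≤ D * G (cns u x) := hgD _ (cns_mem hu hx)
        _ ≤ D * (B * G x) := by gcongr; exact hG u hu x hx
        _ = _ := by ring
    have hφM : ∀ h, φ h ≤ D * B * M := by
      intro h
      by_cases hh : S u + h ∈ A
      · simp only [φ, hh, if_true]
        calc _ ≤ JJ S ν (S u + h) (fun x => (D * B) * G x) := JJ_mono hC hh hgu
          _ = (D * B) * JJ S ν (S u + h) G := JJ_const_mul (ENNReal.mul_ne_top hD hB)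
          _ ≤ _ := by gcongr; exact hM _ hh
      · simp [φ, hh]
    have h1 : JJ S ν u g = ∫⁻ h, φ h ∂μ := by
      rw [markov hC u hg]
      refine lintegral_congr_ae ?_
      filter_upwards [hC.inv u hu] with h hh
      simp [φ, hh]
    have h2 : ∫⁻ h, φ (h - Δ) ∂μ ≤ ∫⁻ h, (ex E * JJ S ν (S u' + h) (fun x => g' (cns u' x)) +
        2 * ENNReal.ofReal (C * (q * δ)) * B * (D * B) * M) ∂μ := by
      refine lintegral_mono_ae ?_
      filter_upwards [hC.inv u' hu'] with h hh
      by_cases hh2 : S u + (h - Δ) ∈ A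
      · simp only [φ, hh2, if_true]
        refine ih (q * δ) (D * B) _ _ (by positivity) (ENNReal.mul_ne_top hD hB)
          (hg.comp (meas_cns u)) (hg'.comp (meas_cns u')) hgu ?_ _ hh2 _ hh ?_
        · intro x x' hx hx' hxx
          refine hgg _ _ (cns_mem hu hx) (cns_mem hu' hx') ?_
          intro j hj
          cases j with
          | zero => simpa [cns] using huu
          | succ j =>
            have := hxx j (by omega)
            simp only [cns]
            calc _ ≤ _ := this
              _ = _ := by ring
        · calc ‖S u + (h - Δ) - (S u' + h)‖ = ‖S u - Δ - S u'‖ := by congr 1; abel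
            _ ≤ q * ‖u - u'‖ := hΔ
            _ ≤ _ := by gcongr
      · simp [φ, hh2]
    rw [lintegral_add_right _ measurable_const, lintegral_const_mul' _ _ (ex_ne_top E),
      ← markov hC u' hg', lintegral_const, measure_univ, mul_one] at h2
    calc JJ S ν u g = ∫⁻ h, φ h ∂μ := h1
      _ ≤ _ := hφ _ φ hφM
      _ ≤ (ex E * JJ S ν u' g' + 2 * ENNReal.ofReal (C * (q * δ)) * B * (D * B) * M) +
          ENNReal.ofReal (C * δ) * (D * B * M) := by
        gcongr
      _ = ex E * JJ S ν u' g' + ((2 * ENNReal.ofReal q * B) * (ENNReal.ofReal (C * δ) * B * D * M)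
          + ENNReal.ofReal (C * δ) * B * D * M) := by
        rw [show C * (q * δ) = q * (C * δ) by ring, ENNReal.ofReal_mul hq.le]; ring
      _ ≤ ex E * JJ S ν u' g' + (1 * (ENNReal.ofReal (C * δ) * B * D * M)
          + ENNReal.ofReal (C * δ) * B * D * M) := by gcongr
      _ = _ := by ring

lemma super [IsProbabilityMeasure μ] [IsProbabilityMeasure ν] (hC : MC S μ ν A)
    {a c : ℝ≥0∞} {h : (ℕ → H) → ℝ≥0∞} (hh : Measurable h)
    (hhc : ∀ v ∈ A, c ≤ JJ S ν v h) (n : ℕ) :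
    ∀ (g g' : (ℕ → H) → ℝ≥0∞), Measurable g → Measurable g' →
      (∀ x x' : ℕ → H, (∀ n, x n ∈ A) → (∀ n, x' n ∈ A) →
        (∀ j < n, x j = x' j) → a * g' x' ≤ g x) →
      ∀ u ∈ A, a * JJ S ν u g' * c ≤ JJ S ν u (fun x => g x * h (fun j => x (n + j))) := by
  induction n with
  | zero =>
    intro g g' hg hg' hgg u hu
    have h1 : ∀ᵐ y ∂ν, a * JJ S ν u g' ≤ g (pth S u y) := by
      filter_upwards [path_mem hC hu] with y hy
      calc a * JJ S ν u g' ≤ ∫⁻ y', a * g' (pth S u y') ∂ν := by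
            apply lintegral_const_mul_le
        _ ≤ ∫⁻ y', g (pth S u y) ∂ν := by
            refine lintegral_mono_ae ?_
            filter_upwards [path_mem hC hu] with y' hy'
            exact hgg _ _ hy hy' (by simp)
        _ = _ := by simp
    calc a * JJ S ν u g' * c ≤ a * JJ S ν u g' * JJ S ν u h := by gcongr; exact hhc u hu
      _ ≤ ∫⁻ y, a * JJ S ν u g' * h (pth S u y) ∂ν := lintegral_const_mul_le _ _
      _ ≤ _ := by
        refine lintegral_mono_ae ?_
        filter_upwards [h1] with y hy
        simp only [zero_add]
        gcongr
  | succ n ih =>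
    intro g g' hg hg' hgg u hu
    have hm : Measurable (fun x : ℕ → H => g x * h (fun j => x (n + 1 + j))) :=
      hg.mul (hh.comp (measurable_pi_lambda _ fun j => measurable_pi_apply _))
    rw [markov hC u hm, markov hC u hg']
    calc a * (∫⁻ k, JJ S ν (S u + k) (fun x => g' (cns u x)) ∂μ) * c
        = c * (a * ∫⁻ k, JJ S ν (S u + k) (fun x => g' (cns u x)) ∂μ) := by ring
      _ ≤ ∫⁻ k, c * (a * JJ S ν (S u + k) (fun x => g' (cns u x))) ∂μ := by
          refine le_trans ?_ (lintegral_const_mul_le _ _)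
          gcongr
          exact lintegral_const_mul_le _ _
      _ ≤ _ := by
          refine lintegral_mono_ae ?_
          filter_upwards [hC.inv u hu] with k hk
          have := ih (fun x => g (cns u x)) (fun x => g' (cns u x)) (hg.comp (meas_cns u))
            (hg'.comp (meas_cns u)) ?_ _ hk
          · calc _ = a * JJ S ν (S u + k) (fun x => g' (cns u x)) * c := by ring
              _ ≤ _ := this
              _ = _ := by
                congr 1
                funext x
                have : (fun j => cns u x (n + 1 + j)) = fun j => x (n + j) := by
                  funext j
                  rw [show n + 1 + j = (n + j) + 1 by ring]; rfl
                rw [this]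
          · intro x x' hx hx' hxx
            refine hgg _ _ (cns_mem hu hx) (cns_mem hu hx') ?_
            intro j hj
            cases j with
            | zero => rfl
            | succ j => exact hxx j (by omega)

lemma reach_lower [IsProbabilityMeasure μ] [IsProbabilityMeasure ν] (hC : MC S μ ν A)
    (w : ℝ) (n : ℕ) : ∀ v₀ y : H, Reach S μ n v₀ y → ∀ O : Set H, IsOpen O → y ∈ O →
      ∃ U : Set H, IsOpen U ∧ v₀ ∈ U ∧ ∃ p : ℝ≥0∞, p ≠ 0 ∧
        ∀ (G : (ℕ → H) → ℝ≥0∞), Measurable G →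
          (∀ v ∈ A, ∀ x : ℕ → H, (∀ n, x n ∈ A) → ex (-w) * G x ≤ G (cns v x)) →
          ∀ c : ℝ≥0∞, (∀ u ∈ A, u ∈ O → c ≤ JJ S ν u G) → ∀ v ∈ A, v ∈ U → p * c ≤ JJ S ν v G := by
  induction n with
  | zero =>
    intro v₀ y hr O hO hy
    refine ⟨O, hO, ?_, 1, one_ne_zero, ?_⟩
    · have : v₀ = y := hr
      rwa [this]
    · intro G _ _ c hc v hv hvO
      simpa using hc v hv hvO
  | succ n ih =>
    intro v₀ y hr O hO hy
    obtain ⟨h, hh, hr⟩ := hr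
    obtain ⟨U1, hU1, hv1, p, hp, hG1⟩ := ih _ _ hr O hO hy
    have hcont : Continuous (fun p : H × H => S p.1 + p.2) :=
      (hC.cont.comp continuous_fst).add continuous_snd
    have hnb : (fun p : H × H => S p.1 + p.2) ⁻¹' U1 ∈ 𝓝 (v₀, h) :=
      (hU1.preimage hcont).mem_nhds hv1
    rw [nhds_prod_eq, Filter.mem_prod_iff] at hnb
    obtain ⟨U, hU, W, hW, hUW⟩ := hnb
    obtain ⟨U', hU'U, hU', hvU'⟩ := mem_nhds_iff.1 hU
    obtain ⟨W', hW'W, hW', hhW'⟩ := mem_nhds_iff.1 hW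
    refine ⟨U', hU', hvU', ex (-w) * (p * μ W'), ?_, ?_⟩
    · exact mul_ne_zero (ex_pos _).ne' (mul_ne_zero hp (hh W' (hW'.mem_nhds hhW')).ne')
    · intro G hGm hG c hc v hv hvU
      rw [markov hC v hGm]
      calc ex (-w) * (p * μ W') * c = ex (-w) * ((p * c) * μ W') := by ring
        _ = ex (-w) * ∫⁻ k in W', p * c ∂μ := by rw [lintegral_const, Measure.restrict_apply_univ]
        _ ≤ ex (-w) * ∫⁻ k in W', JJ S ν (S v + k) G ∂μ := by
            refine mul_le_mul' le_rfl ?_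
            refine lintegral_mono_ae ?_
            filter_upwards [ae_restrict_of_ae (hC.inv v hv), ae_restrict_mem hW'.measurableSet]
              with k hk hkW
            exact hG1 G hGm hG c hc _ hk (hUW (Set.mk_mem_prod (hU'U hvU) (hW'W hkW)))
        _ ≤ ex (-w) * ∫⁻ k, JJ S ν (S v + k) G ∂μ := by
            refine mul_le_mul' le_rfl ?_
            exact setLIntegral_le_lintegral _ _
        _ ≤ ∫⁻ k, ex (-w) * JJ S ν (S v + k) G ∂μ := lintegral_const_mul_le _ _
        _ ≤ _ := by
            refine lintegral_mono_ae ?_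
            filter_upwards [hC.inv v hv] with k hk
            rw [← JJ_const_mul (ex_ne_top _)]
            exact JJ_mono hC hk (fun x hx => hG v hv x hx)

end chain

lemma fekete_approx (a : ℕ → ℝ) (w w' : ℝ) (hw : 0 ≤ w) (hw' : 0 ≤ w')
    (hb : ∀ k : ℕ, |a k| ≤ w * k + w')
    (h : ∀ ε : ℝ, 0 < ε → ∃ C : ℝ, ∀ k l : ℕ, a k + a l - ε * k - C ≤ a (k + l)) :
    ∃ ψ : ℝ, ∀ ε : ℝ, 0 < ε → ∀ᶠ k : ℕ in atTop, k * (ψ - ε) ≤ a k ∧ a k ≤ k * (ψ + ε) := by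
  have hbd : ∀ k : ℕ, |a k / k| ≤ w + w' := by
    intro k
    rcases Nat.eq_zero_or_pos k with rfl | hk
    · simp; positivity
    · have hk' : (1 : ℝ) ≤ k := by exact_mod_cast hk
      rw [abs_div, Nat.abs_cast, div_le_iff₀ (by positivity)]
      nlinarith [hb k]
  have hB1 : IsBoundedUnder (· ≤ ·) atTop (fun k : ℕ => a k / k) :=
    isBoundedUnder_of ⟨w + w', fun k => (abs_le.1 (hbd k)).2⟩
  have hB2 : IsBoundedUnder (· ≥ ·) atTop (fun k : ℕ => a k / k) :=
    isBoundedUnder_of ⟨-(w + w'), fun k => (abs_le.1 (hbd k)).1⟩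
  refine ⟨limsup (fun k : ℕ => a k / k) atTop, fun ε hε => ?_⟩
  set L := limsup (fun k : ℕ => a k / k) atTop with hL
  have hup : ∀ᶠ k : ℕ in atTop, a k / k < L + ε :=
    eventually_lt_of_limsup_lt (by linarith) hB1
  have hfr : ∃ᶠ k : ℕ in atTop, L - ε / 4 < a k / k :=
    frequently_lt_of_lt_limsup hB2.isCoboundedUnder_le (by linarith)
  obtain ⟨C, hC⟩ := h (ε / 4) (by positivity)
  have hCk : ∀ᶠ k : ℕ in atTop, C / k < ε / 4 :=
    (tendsto_const_div_atTop_nhds_zero_nat C).eventually_lt_const (by positivity)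
  obtain ⟨k, hk1, hk2, hk3⟩ := (hfr.and_eventually (hCk.and (eventually_ge_atTop 1))).exists
  have hk0 : (0 : ℝ) < k := by exact_mod_cast hk3
  set b := a k - ε / 4 * k - C with hbdef
  have hbk : k * (L - 3 * ε / 4) < b := by
    rw [lt_div_iff₀ hk0] at hk1
    rw [div_lt_iff₀ hk0] at hk2
    rw [hbdef]; linarith
  have hind : ∀ n s : ℕ, n * b + a s ≤ a (k * n + s) := by
    intro n s
    induction n with
    | zero => simp
    | succ n ih =>
      have := hC k (k * n + s)
      rw [show k * (n + 1) + s = k + (k * n + s) by ring]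
      push_cast
      linarith
  have hlow : ∀ N : ℕ, N * (L - 3 * ε / 4) - (|b| + |L - 3 * ε / 4| * k + w * k + w') ≤ a N := by
    intro N
    have h1 := hind (N / k) (N % k)
    rw [Nat.div_add_mod] at h1
    have h2 : |a (N % k)| ≤ w * k + w' := by
      refine (hb _).trans ?_
      have : ((N % k : ℕ) : ℝ) ≤ k := by exact_mod_cast (Nat.mod_lt N hk3).le
      nlinarith
    have h3 : (N : ℝ) = k * (N / k : ℕ) + (N % k : ℕ) := by
      exact_mod_cast (Nat.div_add_mod N k).symm
    have h4 : ((N % k : ℕ) : ℝ) ≤ k := by exact_mod_cast (Nat.mod_lt N hk3).le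
    have h4' : (0 : ℝ) ≤ ((N % k : ℕ) : ℝ) := by positivity
    have h5 : (0 : ℝ) ≤ ((N / k : ℕ) : ℝ) := by positivity
    have h6 : ((N / k : ℕ) : ℝ) * (k * (L - 3 * ε / 4)) ≤ (N / k : ℕ) * b := by gcongr
    have h7 : ((N % k : ℕ) : ℝ) * (L - 3 * ε / 4) ≤ |L - 3 * ε / 4| * k := by
      calc _ ≤ ((N % k : ℕ) : ℝ) * |L - 3 * ε / 4| := by gcongr; exact le_abs_self _
        _ ≤ k * |L - 3 * ε / 4| := by gcongr
        _ = _ := by ring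
    have h8 := abs_nonneg b
    have h9 := (abs_le.1 h2).1
    have h10 : (N : ℝ) * (L - 3 * ε / 4) = ((N / k : ℕ) : ℝ) * (k * (L - 3 * ε / 4)) +
      ((N % k : ℕ) : ℝ) * (L - 3 * ε / 4) := by
      conv_lhs => rw [h3]
      ring
    linarith
  set D := |b| + |L - 3 * ε / 4| * k + w * k + w' with hD
  have hDk : ∀ᶠ N : ℕ in atTop, D / N < ε / 4 :=
    (tendsto_const_div_atTop_nhds_zero_nat D).eventually_lt_const (by positivity)
  filter_upwards [hup, hDk, eventually_ge_atTop 1] with N hN1 hN2 hN3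
  have hN0 : (0 : ℝ) < N := by exact_mod_cast hN3
  rw [div_lt_iff₀ hN0] at hN1 hN2
  have := hlow N
  constructor
  · linarith
  · linarith

section fam
variable {ι : Type} [Fintype ι] [Nonempty ι]

/-- ergodic sums -/
def SS (W : ι → (ℕ → H) → ℝ) (k : ℕ) (x : ℕ → H) (i : ι) : ℝ :=
  ∑ n ∈ Finset.range k, W i (fun j => x (n + j))

/-- minimum of the ergodic sums -/
def ff (W : ι → (ℕ → H) → ℝ) (k : ℕ) (x : ℕ → H) : ℝ :=
  Finset.univ.inf' Finset.univ_nonempty (SS W k x)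

/-- exponential of the minimum -/
def GG (W : ι → (ℕ → H) → ℝ) (k : ℕ) (x : ℕ → H) : ℝ≥0∞ := ex (ff W k x)

/-- bounded continuous family -/
structure Fam (W : ι → (ℕ → H) → ℝ) (w : ℝ) : Prop where
  cont : ∀ i, Continuous (W i)
  bd : ∀ i x, |W i x| ≤ w

lemma inf_mono {a b : ι → ℝ} {c : ℝ} (h : ∀ i, a i ≤ b i + c) :
    Finset.univ.inf' Finset.univ_nonempty a ≤ Finset.univ.inf' Finset.univ_nonempty b + c := by
  obtain ⟨i, -, hi⟩ := Finset.exists_mem_eq_inf' Finset.univ_nonempty b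
  rw [hi]
  exact (Finset.inf'_le _ (Finset.mem_univ i)).trans (h i)

lemma Fam.nonneg {W : ι → (ℕ → H) → ℝ} {w : ℝ} (hW : Fam W w) : 0 ≤ w :=
  (abs_nonneg _).trans (hW.bd (Classical.arbitrary ι) 0)

lemma SS_cont {W : ι → (ℕ → H) → ℝ} {w : ℝ} (hW : Fam W w) (k : ℕ) (i : ι) :
    Continuous (fun x => SS W k x i) := by
  unfold SS
  refine continuous_finsetSum _ fun n _ => (hW.cont i).comp ?_
  exact continuous_pi fun j => continuous_apply _

lemma ff_cont {W : ι → (ℕ → H) → ℝ} {w : ℝ} (hW : Fam W w) (k : ℕ) : Continuous (ff W k) := by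
  unfold ff
  exact Continuous.finset_inf'_apply _ (fun i _ => SS_cont hW k i)

lemma SS_cns {W : ι → (ℕ → H) → ℝ} (k : ℕ) (u : H) (x : ℕ → H) (i : ι) :
    SS W k (cns u x) i + W i (fun j => cns u x (k + j)) = SS W k x i + W i (cns u x) := by
  unfold SS
  rw [← Finset.sum_range_succ (fun n => W i (fun j => cns u x (n + j))), Finset.sum_range_succ']
  congr 1
  · refine Finset.sum_congr rfl fun n _ => ?_
    congr 1; funext j
    rw [show n + 1 + j = (n + j) + 1 by ring]; rfl
  · simp

lemma ff_cns {W : ι → (ℕ → H) → ℝ} {w : ℝ} (hW : Fam W w) (k : ℕ) (u : H) (x : ℕ → H) :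
    ff W k (cns u x) ≤ ff W k x + 2 * w ∧ ff W k x ≤ ff W k (cns u x) + 2 * w := by
  constructor
  · refine inf_mono fun i => ?_
    have := SS_cns (W := W) k u x i
    have h1 := abs_le.1 (hW.bd i (cns u x))
    have h2 := abs_le.1 (hW.bd i (fun j => cns u x (k + j)))
    linarith
  · refine inf_mono fun i => ?_
    have := SS_cns (W := W) k u x i
    have h1 := abs_le.1 (hW.bd i (cns u x))
    have h2 := abs_le.1 (hW.bd i (fun j => cns u x (k + j)))
    linarith

lemma cns_shift (x : ℕ → H) : cns (x 0) (fun j => x (1 + j)) = x := by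
  funext n
  cases n with
  | zero => rfl
  | succ n => simp only [cns]; rw [add_comm]

lemma ff_shift {W : ι → (ℕ → H) → ℝ} {w : ℝ} (hW : Fam W w) (k r : ℕ) (x : ℕ → H) :
    ff W k (fun j => x (r + j)) ≤ ff W k x + 2 * w * r := by
  induction r generalizing x with
  | zero => simp
  | succ r ih =>
    have h1 := ih (fun j => x (1 + j))
    have h2 := (ff_cns hW k (x 0) (fun j => x (1 + j))).2
    rw [cns_shift] at h2
    have h3 : (fun j => x (r + 1 + j)) = fun j => x (1 + (r + j)) := by
      funext j; congr 1; ring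
    rw [h3]
    push_cast
    linarith

lemma SS_add {W : ι → (ℕ → H) → ℝ} (k l : ℕ) (x : ℕ → H) (i : ι) :
    SS W (k + l) x i = SS W k x i + SS W l (fun j => x (k + j)) i := by
  unfold SS
  rw [Finset.sum_range_add]
  simp only [add_assoc]

lemma SS_bd {W : ι → (ℕ → H) → ℝ} {w : ℝ} (hW : Fam W w) (k : ℕ) (x : ℕ → H) (i : ι) :
    |SS W k x i| ≤ k * w := by
  unfold SS
  refine (Finset.abs_sum_le_sum_abs _ _).trans ?_
  refine (Finset.sum_le_sum (fun n _ => hW.bd i _)).trans ?_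
  simp

lemma ff_bd {W : ι → (ℕ → H) → ℝ} {w : ℝ} (hW : Fam W w) (k : ℕ) (x : ℕ → H) :
    |ff W k x| ≤ k * w := by
  unfold ff
  obtain ⟨i, -, hi⟩ := Finset.exists_mem_eq_inf' Finset.univ_nonempty (SS W k x)
  rw [hi]
  exact SS_bd hW k x i

lemma unif_one {A : Set H} (hA : IsCompact A) {V : (ℕ → H) → ℝ} (hV : Continuous V) {w : ℝ}
    (hw : ∀ x, |V x| ≤ w) {ε : ℝ} (hε : 0 < ε) : ∃ L : ℝ, 0 ≤ L ∧ ∃ r : ℕ, ∀ x x' : ℕ → H,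
      (∀ n, x n ∈ A) → (∀ n, x' n ∈ A) →
        |V x - V x'| ≤ ε + L * ∑ j ∈ Finset.range r, ‖x j - x' j‖ := by
  have hw0 : 0 ≤ w := (abs_nonneg _).trans (hw 0)
  let T : Set ((ℕ → H) × (ℕ → H)) :=
    ((Set.univ.pi fun _ => A) ×ˢ (Set.univ.pi fun _ => A)) ∩ {p | ε ≤ |V p.1 - V p.2|}
  have hT : IsCompact T := by
    refine ((isCompact_univ_pi fun _ => hA).prod (isCompact_univ_pi fun _ => hA)).inter_right ?_
    exact isClosed_le continuous_const
      ((hV.comp continuous_fst).sub (hV.comp continuous_snd)).abs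
  let d : ℕ → ((ℕ → H) × (ℕ → H)) → ℝ := fun r p => ∑ j ∈ Finset.range r, ‖p.1 j - p.2 j‖
  have hd : ∀ r, Continuous (d r) := by
    intro r
    refine continuous_finsetSum _ fun j _ => ?_
    exact (((continuous_apply j).comp continuous_fst).sub
      ((continuous_apply j).comp continuous_snd)).norm
  have hmono : Monotone d := by
    intro r s hrs p
    exact Finset.sum_le_sum_of_subset_of_nonneg (by simpa using hrs) (fun _ _ _ => norm_nonneg _)
  obtain ⟨r, hr⟩ : ∃ r, T ⊆ {p | 0 < d r p} := by
    refine hT.elim_directed_cover (fun r => {p | 0 < d r p})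
      (fun r => isOpen_lt continuous_const (hd r)) ?_ ?_
    · intro p hp
      have hne : p.1 ≠ p.2 := by
        intro h
        have := hp.2
        simp [h] at this
        linarith
      obtain ⟨j, hj⟩ := Function.ne_iff.1 hne
      refine Set.mem_iUnion.2 ⟨j + 1, ?_⟩
      show 0 < d (j + 1) p
      refine Finset.sum_pos' (fun _ _ => norm_nonneg _) ⟨j, by simp, ?_⟩
      exact norm_pos_iff.2 (sub_ne_zero.2 hj)
    · refine Monotone.directed_le ?_
      intro r s hrs p hp
      exact lt_of_lt_of_le hp (hmono hrs p)
  obtain ⟨δ, hδ, hδT⟩ : ∃ δ > 0, ∀ p ∈ T, δ ≤ d r p := by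
    rcases T.eq_empty_or_nonempty with h | h
    · exact ⟨1, one_pos, by simp [h]⟩
    · obtain ⟨p, hp, hmin⟩ := hT.exists_isMinOn h (hd r).continuousOn
      exact ⟨d r p, hr hp, fun p' hp' => hmin hp'⟩
  refine ⟨2 * w / δ, by positivity, r, fun x x' hx hx' => ?_⟩
  have hdn : 0 ≤ ∑ j ∈ Finset.range r, ‖x j - x' j‖ := Finset.sum_nonneg fun _ _ => norm_nonneg _
  by_cases hle : ε ≤ |V x - V x'|
  · have h1 : δ ≤ d r (x, x') := hδT (x, x') ⟨⟨fun n _ => hx n, fun n _ => hx' n⟩, hle⟩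
    have h2 : |V x - V x'| ≤ 2 * w := by
      have h1 := abs_le.1 (hw x)
      have h2 := abs_le.1 (hw x')
      rw [abs_le]; constructor <;> linarith
    have h3 : 2 * w ≤ 2 * w / δ * d r (x, x') := by
      rw [div_mul_eq_mul_div, le_div_iff₀ hδ]
      gcongr
    calc |V x - V x'| ≤ 2 * w / δ * d r (x, x') := h2.trans h3
      _ ≤ _ := by
        have : d r (x, x') = ∑ j ∈ Finset.range r, ‖x j - x' j‖ := rfl
        rw [this]; linarith
  · have : 0 ≤ 2 * w / δ * ∑ j ∈ Finset.range r, ‖x j - x' j‖ := by positivity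
    linarith

lemma sum_shift_le (a : ℕ → ℝ) (ha : ∀ n, 0 ≤ a n) (k r : ℕ) :
    ∑ n ∈ Finset.range k, ∑ j ∈ Finset.range r, a (n + j)
      ≤ r * ∑ n ∈ Finset.range (k + r), a n := by
  rw [Finset.sum_comm]
  have : ∀ j ∈ Finset.range r, ∑ n ∈ Finset.range k, a (n + j) ≤
      ∑ n ∈ Finset.range (k + r), a n := by
    intro j hj
    have h1 : ∑ n ∈ Finset.range k, a (n + j) = ∑ n ∈ Finset.Ico j (k + j), a n := by
      rw [Finset.sum_Ico_eq_sum_range]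
      simp [add_comm]
    rw [h1]
    refine Finset.sum_le_sum_of_subset_of_nonneg ?_ (fun _ _ _ => ha _)
    intro n hn
    simp at hn hj ⊢
    omega
  refine (Finset.sum_le_sum this).trans ?_
  simp

lemma ff_unif {A : Set H} (hA : IsCompact A) {W : ι → (ℕ → H) → ℝ} {w : ℝ} (hW : Fam W w)
    {ε : ℝ} (hε : 0 < ε) : ∃ L : ℝ, 0 ≤ L ∧ ∃ r : ℕ, ∀ (k : ℕ) (x x' : ℕ → H),
      (∀ n, x n ∈ A) → (∀ n, x' n ∈ A) →
        ff W k x ≤ ff W k x' + (ε * k + L * ∑ j ∈ Finset.range (k + r), ‖x j - x' j‖) := by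
  choose L hL r hr using fun i => unif_one hA (hW.cont i) (hW.bd i) hε
  let R := Finset.univ.sup r
  let LL := ∑ i, L i
  have hLL : 0 ≤ LL := Finset.sum_nonneg fun i _ => hL i
  refine ⟨LL * R, by positivity, R, fun k x x' hx hx' => inf_mono fun i => ?_⟩
  have h1 : ∀ n, W i (fun j => x (n + j)) ≤ W i (fun j => x' (n + j)) +
      (ε + LL * ∑ j ∈ Finset.range R, ‖x (n + j) - x' (n + j)‖) := by
    intro n
    have h2 := hr i (fun j => x (n + j)) (fun j => x' (n + j)) (fun _ => hx _) (fun _ => hx' _)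
    have h3 : L i * ∑ j ∈ Finset.range (r i), ‖x (n + j) - x' (n + j)‖ ≤
        LL * ∑ j ∈ Finset.range R, ‖x (n + j) - x' (n + j)‖ := by
      refine mul_le_mul ?_ ?_ (Finset.sum_nonneg fun _ _ => norm_nonneg _) hLL
      · exact Finset.single_le_sum (fun i _ => hL i) (Finset.mem_univ i)
      · refine Finset.sum_le_sum_of_subset_of_nonneg ?_ (fun _ _ _ => norm_nonneg _)
        simpa using Finset.le_sup (f := r) (Finset.mem_univ i)
    have h4 := (abs_le.1 h2).2
    linarith
  unfold SS
  refine (Finset.sum_le_sum fun n _ => h1 n).trans ?_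
  rw [Finset.sum_add_distrib, Finset.sum_add_distrib, ← Finset.mul_sum]
  have h5 := sum_shift_le (fun n => ‖x n - x' n‖) (fun _ => norm_nonneg _) k R
  have h6 := mul_le_mul_of_nonneg_left h5 hLL
  simp only [Finset.sum_const, Finset.card_range, nsmul_eq_mul]
  linarith

end fam

section harn
variable [SecondCountableTopology H] [MeasurableSpace H] [BorelSpace H]
  {S : H → H} {μ : Measure H} {ν : Measure (ℕ → H)} {A : Set H}

lemma irr_unif [IsProbabilityMeasure μ] [IsProbabilityMeasure ν] (hC : MC S μ ν A)
    (w : ℝ) {δ : ℝ} (hδ : 0 < δ) : ∃ p : ℝ≥0∞, p ≠ 0 ∧ 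
        ∀ (G : (ℕ → H) → ℝ≥0∞), Measurable G →
          (∀ v ∈ A, ∀ x : ℕ → H, (∀ n, x n ∈ A) → ex (-w) * G x ≤ G (cns v x)) →
          ∀ c : ℝ≥0∞, ∀ u ∈ A, (∀ u' ∈ A, ‖u - u'‖ ≤ δ → c ≤ JJ S ν u' G) →
          ∀ v ∈ A, p * c ≤ JJ S ν v G := by
  have key := (hC.comp.prod hC.comp).induction_on (p := fun s : Set (H × H) =>
      ∃ p : ℝ≥0∞, p ≠ 0 ∧ 
        ∀ (G : (ℕ → H) → ℝ≥0∞), Measurable G →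
          (∀ v ∈ A, ∀ x : ℕ → H, (∀ n, x n ∈ A) → ex (-w) * G x ≤ G (cns v x)) →
          ∀ c : ℝ≥0∞, ∀ z ∈ s, z.1 ∈ A → z.2 ∈ A →
            (∀ u' ∈ A, ‖z.1 - u'‖ ≤ δ → c ≤ JJ S ν u' G) → p * c ≤ JJ S ν z.2 G) ?_ ?_ ?_ ?_
  · obtain ⟨p, hp, h⟩ := key
    exact ⟨p, hp, fun G hG hG' c u hu hc v hv => h G hG hG' c (u, v) ⟨hu, hv⟩ hu hv hc⟩
  · exact ⟨1, one_ne_zero, by simp⟩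
  · rintro s t hst ⟨p, hp, h⟩
    exact ⟨p, hp, fun G hG hG' c z hz => h G hG hG' c z (hst hz)⟩
  · rintro s t ⟨p, hp, h⟩ ⟨p', hp', h'⟩
    refine ⟨min p p', by simp [min_eq_iff, hp, hp', ne_eq, min_def]; split_ifs <;> assumption, ?_⟩
    intro G hG hG' c z hz h1 h2 h3
    rcases hz with hz | hz
    · exact le_trans (by gcongr; exact min_le_left _ _) (h G hG hG' c z hz h1 h2 h3)
    · exact le_trans (by gcongr; exact min_le_right _ _) (h' G hG hG' c z hz h1 h2 h3)
  · rintro ⟨u, v⟩ ⟨hu, hv⟩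
    obtain ⟨n, y, hr, hy⟩ := hC.irr v hv u hu (δ / 2) (by positivity)
    obtain ⟨U, hU, hvU, p, hp, h⟩ := reach_lower hC w n v y hr (Metric.ball u (δ/2))
      Metric.isOpen_ball (by simpa [Metric.mem_ball, dist_eq_norm] using hy)
    refine ⟨Metric.ball u (δ/2) ×ˢ U, mem_nhdsWithin_of_mem_nhds
      (prod_mem_nhds (Metric.ball_mem_nhds _ (by positivity)) (hU.mem_nhds hvU)), p, hp, ?_⟩
    rintro G hG hG' c ⟨u1, v1⟩ ⟨h1, h2⟩ h3 h4 h5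
    refine h G hG hG' c ?_ v1 h4 h2
    intro u2 hu2 hu2'
    refine h5 u2 hu2 ?_
    have a1 : dist u1 u < δ/2 := h1
    have a2 : dist u2 u < δ/2 := hu2'
    have := dist_triangle_right u1 u2 u
    rw [← dist_eq_norm]; linarith

variable {ι : Type} [Fintype ι] [Nonempty ι]

lemma GG_meas {W : ι → (ℕ → H) → ℝ} {w : ℝ} (hW : Fam W w) (k : ℕ) : Measurable (GG W k) := by
  unfold GG ex
  exact (ENNReal.continuous_ofReal.comp (Real.continuous_exp.comp (ff_cont hW k))).measurable

lemma JJ_bd [IsProbabilityMeasure ν] {W : ι → (ℕ → H) → ℝ} {w : ℝ} (hW : Fam W w) (k : ℕ) (u : H) :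
    ex (-(k*w)) ≤ JJ S ν u (GG W k) ∧ JJ S ν u (GG W k) ≤ ex (k*w) := by
  unfold JJ GG
  constructor
  · calc ex (-(k*w)) = ∫⁻ y, ex (-(k*w)) ∂ν := by simp
      _ ≤ _ := lintegral_mono fun y => ex_le.2 (abs_le.1 (ff_bd hW k _)).1
  · calc _ ≤ ∫⁻ y, ex (k*w) ∂ν := lintegral_mono fun y => ex_le.2 (abs_le.1 (ff_bd hW k _)).2
      _ = _ := by simp

lemma harnack [IsProbabilityMeasure μ] [IsProbabilityMeasure ν] (hC : MC S μ ν A)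
    {W : ι → (ℕ → H) → ℝ} {w : ℝ} (hW : Fam W w) {ε : ℝ} (hε : 0 < ε) :
    ∃ C : ℝ, ∀ k : ℕ, ∀ u ∈ A, ∀ u' ∈ A,
      JJ S ν u (GG W k) ≤ ex (ε * k + C) * JJ S ν u' (GG W k) := by
  set q : ℝ := Real.exp (-(2*w)) / 2 with hq
  have hq0 : 0 < q := by positivity
  have hw := hW.nonneg
  have hq2 : q ≤ 1/2 := by
    rw [hq]; gcongr; exact Real.exp_le_one_iff.2 (by linarith)
  obtain ⟨C0, hC0, hcpl⟩ := hC.cpl q hq0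
  obtain ⟨L, hL, r, hLr⟩ := ff_unif hC.comp hW hε
  set δ : ℝ := Real.exp (-(2*w)) / (4 * (C0 + 1)) with hδ
  have hδ0 : 0 < δ := by positivity
  obtain ⟨p, hp, hirr⟩ := irr_unif hC (2*w) hδ0
  have hp1 : min p 1 ≠ 0 := by 
    rcases min_choice p 1 with h | h <;> rw [h]
    · exact hp
    · exact one_ne_zero
  obtain ⟨P, hP⟩ := ex_exists hp1 (ne_top_of_le_ne_top ENNReal.one_ne_top (min_le_right _ _))
  refine ⟨2 * L * δ - P + Real.log 4, ?_⟩
  intro k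
  set M : ℝ≥0∞ := ⨆ v ∈ A, JJ S ν v (GG W k) with hM
  have hMt : M ≤ ex (k*w) := iSup₂_le fun v hv => (JJ_bd hW k v).2
  have hMtop : M ≠ ⊤ := ne_top_of_le_ne_top (ex_ne_top _) hMt
  have hM1 : ∀ v ∈ A, JJ S ν v (GG W k) ≤ M := fun v hv => le_iSup₂_of_le v hv le_rfl
  have hM0 : M ≠ 0 := by
    obtain ⟨v, hv⟩ := hC.ne
    exact (((ex_pos _).trans_le (JJ_bd hW k v).1).trans_le (hM1 v hv)).ne'
  set E : ℝ := ε * k + 2 * L * δ with hE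
  have hnear : ∀ u ∈ A, ∀ u' ∈ A, ‖u - u'‖ ≤ δ →
      JJ S ν u (GG W k) ≤ ex E * JJ S ν u' (GG W k) + 2⁻¹ * M := by
    intro u hu u' hu' huu
    have := coupling hC hq0 hC0 hcpl (G := GG W k) (B := ex (2*w)) (M := M) (ex_ne_top _) ?_ hM1 ?_ E
      (k + r) δ 1 (GG W k) (GG W k) hδ0.le ENNReal.one_ne_top (GG_meas hW k) (GG_meas hW k)
      (by simp) ?_ u hu u' hu' huu
    · refine this.trans ?_
      gcongr
      rw [mul_one]
      have h2 : (2 : ℝ≥0∞) = ENNReal.ofReal 2 := by simp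
      unfold ex
      rw [show (2⁻¹ : ℝ≥0∞) = ENNReal.ofReal (2⁻¹) by rw [ENNReal.ofReal_inv_of_pos (by norm_num)]; simp,
        h2, ← ENNReal.ofReal_mul (by norm_num), ← ENNReal.ofReal_mul (by positivity)]
      apply ENNReal.ofReal_le_ofReal
      have : Real.exp (2*w) * Real.exp (-(2*w)) = 1 := by rw [← Real.exp_add]; simp
      calc 2 * (C0 * δ) * Real.exp (2*w) = 2⁻¹ * (C0 / (C0+1)) * (Real.exp (2*w) * Real.exp (-(2*w))) := by
            rw [hδ]; field_simp; ring
        _ ≤ 2⁻¹ := by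
          rw [this]
          have : C0 / (C0+1) ≤ 1 := by rw [div_le_one (by positivity)]; linarith
          linarith
    · intro v hv x hx
      unfold GG
      rw [← ex_add, ex_le]
      linarith [(ff_cns hW k v x).1]
    · have h2 : (2 : ℝ≥0∞) = ENNReal.ofReal 2 := by simp
      unfold ex
      rw [h2, ← ENNReal.ofReal_mul (by norm_num), ← ENNReal.ofReal_mul (by positivity)]
      rw [hq]
      have : 2 * (Real.exp (-(2*w)) / 2) * Real.exp (2*w) = 1 := by
        rw [mul_div_cancel₀ _ (by norm_num), ← Real.exp_add]; simp
      rw [this]; simp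
    · intro x x' hx hx' hxx
      unfold GG
      rw [← ex_add, ex_le]
      have h1 := hLr k x x' hx hx'
      have h2 : ∑ j ∈ Finset.range (k + r), ‖x j - x' j‖ ≤ 2 * δ := by
        calc _ ≤ ∑ j ∈ Finset.range (k + r), (1/2:ℝ)^j * δ := by
              refine Finset.sum_le_sum fun j hj => ?_
              refine (hxx j (Finset.mem_range.1 hj).le).trans ?_
              gcongr
          _ = (∑ j ∈ Finset.range (k + r), (1/2:ℝ)^j) * δ := by rw [Finset.sum_mul]
          _ ≤ 2 * δ := by gcongr; exact sum_geometric_two_le _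
      have := mul_le_mul_of_nonneg_left h2 hL
      rw [hE]; linarith
  obtain ⟨u0, hu0, hlt⟩ : ∃ u ∈ A, (3/4 : ℝ≥0∞) * M < JJ S ν u (GG W k) := by
    have : (3/4 : ℝ≥0∞) * M < M := by
      conv_rhs => rw [← one_mul M]
      refine ENNReal.mul_lt_mul_left hM0 hMtop ?_
      rw [ENNReal.div_lt_iff (by simp) (by simp)]; norm_num
    rw [hM, lt_iSup_iff] at this
    obtain ⟨u, hu⟩ := this
    rw [lt_iSup_iff] at hu
    obtain ⟨h1, h2⟩ := hu
    exact ⟨u, h1, h2⟩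
  have hlow : ∀ u' ∈ A, ‖u0 - u'‖ ≤ δ → ex (-E) * (4⁻¹ * M) ≤ JJ S ν u' (GG W k) := by
    intro u' hu' h
    have h1 := (hlt.le).trans (hnear u0 hu0 u' hu' h)
    have h2 : (3/4 : ℝ≥0∞) * M = 4⁻¹ * M + 2⁻¹ * M := by
      rw [← add_mul]; congr 1
      rw [← ENNReal.toReal_eq_toReal_iff' (by finiteness) (by finiteness), ENNReal.toReal_add (by simp) (by simp)]
      simp [ENNReal.toReal_div]; norm_num
    rw [h2] at h1
    have h3 : 4⁻¹ * M ≤ ex E * JJ S ν u' (GG W k) :=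
      ENNReal.le_of_add_le_add_right (ENNReal.mul_ne_top (by simp) hMtop) h1
    calc _ ≤ ex (-E) * (ex E * JJ S ν u' (GG W k)) := by gcongr
      _ = _ := by rw [← mul_assoc, mul_comm (ex (-E)), ex_mul_neg, one_mul]
  intro u hu u' hu'
  have := hirr (GG W k) (GG_meas hW k) (by
      intro v hv x hx
      unfold GG
      rw [← ex_add, ex_le]
      linarith [(ff_cns hW k v x).2]) _ u0 hu0 hlow u' hu'
  have h4 : ex (-Real.log 4) = 4⁻¹ := by
    unfold ex
    rw [Real.exp_neg, Real.exp_log (by norm_num), ENNReal.ofReal_inv_of_pos (by norm_num)]; simp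
  have h5 : ex (P + -E + -Real.log 4) * M ≤ JJ S ν u' (GG W k) := by
    refine le_trans ?_ this
    rw [ex_add, ex_add, h4, ← hP, mul_assoc, mul_assoc]
    gcongr
    exact min_le_left _ _
  calc JJ S ν u (GG W k) ≤ M := hM1 u hu
    _ = ex (ε * k + (2 * L * δ - P + Real.log 4)) * (ex (P + -E + -Real.log 4) * M) := by
      rw [← mul_assoc, ← ex_add]
      rw [show ε * k + (2 * L * δ - P + Real.log 4) + (P + -E + -Real.log 4) = 0 by rw [hE]; ring, ex_zero, one_mul]
    _ ≤ _ := by gcongr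
end harn

lemma convex_of_midpoint {E : Type*} [NormedAddCommGroup E] [NormedSpace ℝ E] {D : Set E}
    (hD : IsClosed D) (hm : ∀ x ∈ D, ∀ y ∈ D, (2⁻¹ : ℝ) • (x + y) ∈ D) : Convex ℝ D := by
  rw [convex_iff_segment_subset]
  intro x hx y hy z hz
  rw [segment_eq_image] at hz
  obtain ⟨t, ⟨ht0, ht1⟩, rfl⟩ := hz
  set F : ℝ → E := fun t => (1 - t) • x + t • y with hF
  have hFc : Continuous F := by fun_prop
  have key : ∀ n : ℕ, ∀ m : ℕ, m ≤ 2 ^ n → F (m / 2 ^ n) ∈ D := by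
    intro n
    induction n with
    | zero =>
      intro m hm'
      have : m = 0 ∨ m = 1 := by simp at hm'; omega
      rcases this with rfl | rfl <;> simp [hF, hx, hy]
    | succ n ih =>
      intro m hm'
      rcases Nat.even_or_odd' m with ⟨a, rfl | rfl⟩
      · have := ih a (by rw [pow_succ] at hm'; omega)
        convert! this using 2
        push_cast; rw [pow_succ]; field_simp
      · have h1 := ih a (by rw [pow_succ] at hm'; omega)
        have h2 := ih (a+1) (by rw [pow_succ] at hm'; omega)
        have := hm _ h1 _ h2
        convert! this using 1
        have e : ((2 * a + 1 : ℕ) : ℝ) / 2 ^ (n+1) = 2⁻¹ * ((a : ℝ) / 2^n + ((a+1 : ℕ):ℝ) / 2^n) := by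
          push_cast; rw [pow_succ]; field_simp; ring
        rw [e]
        simp only [hF]
        module
  have hlim : Tendsto (fun n : ℕ => F ((⌊t * 2 ^ n⌋₊ : ℝ) / 2 ^ n)) atTop (𝓝 (F t)) := by
    refine (hFc.tendsto t).comp ?_
    exact (tendsto_nat_floor_mul_div_atTop (R := ℝ) ht0).comp
      (tendsto_pow_atTop_atTop_of_one_lt (r := (2:ℝ)) (by norm_num))
  refine hD.mem_of_tendsto hlim (Eventually.of_forall fun n => key n _ ?_)
  have : t * 2^n ≤ ((2^n : ℕ) : ℝ) := by
    push_cast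
    exact mul_le_of_le_one_left (by positivity) ht1
  exact Nat.floor_le_of_le this

section psi
variable [SecondCountableTopology H] [MeasurableSpace H] [BorelSpace H]
  {S : H → H} {μ : Measure H} {ν : Measure (ℕ → H)} {A : Set H}
variable {ι : Type} [Fintype ι] [Nonempty ι] {ι' : Type} [Fintype ι'] [Nonempty ι']

lemma super_fam [IsProbabilityMeasure μ] [IsProbabilityMeasure ν] (hC : MC S μ ν A)
    {W W' W'' : ι → (ℕ → H) → ℝ} {w : ℝ} (hW : Fam W w) (hW' : Fam W' w) (hW'' : Fam W'' w)
    {ε : ℝ} (hε : 0 < ε) : ∃ C : ℝ, ∀ k l : ℕ,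
      (∀ x i, SS W k x i + SS W' l (fun j => x (k + j)) i ≤ SS W'' (k + l) x i) →
      ∀ c : ℝ≥0∞, (∀ v ∈ A, c ≤ JJ S ν v (GG W' l)) → ∀ u ∈ A,
        ex (-(ε * k) - C) * JJ S ν u (GG W k) * c ≤ JJ S ν u (GG W'' (k + l)) := by
  obtain ⟨L, hL, r, hLr⟩ := ff_unif hC.comp hW hε
  refine ⟨2 * w * r, ?_⟩
  intro k l hkl c hc u hu
  have h1 := super hC (a := ex (-(ε * k))) (GG_meas hW' l) hc (k + r) (GG W k) (GG W k)
    (GG_meas hW k) (GG_meas hW k) (by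
      intro x x' hx hx' hxx
      unfold GG
      rw [← ex_add, ex_le]
      have := hLr k x' x hx' hx
      have h0 : ∑ j ∈ Finset.range (k + r), ‖x' j - x j‖ = 0 := by
        refine Finset.sum_eq_zero fun j hj => ?_
        rw [hxx j (Finset.mem_range.1 hj)]; simp
      rw [h0] at this; linarith) u hu
  have h2 : JJ S ν u (fun x => GG W k x * GG W' l (fun j => x (k + r + j))) ≤
      ex (2 * w * r) * JJ S ν u (GG W'' (k + l)) := by
    rw [← JJ_const_mul (ex_ne_top _)]
    refine JJ_mono hC hu ?_
    intro x hx
    unfold GG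
    rw [← ex_add, ← ex_add, ex_le]
    have h3 := ff_shift hW' l r (fun j => x (k + j))
    have h4 : ff W k x + ff W' l (fun j => x (k + j)) ≤ ff W'' (k+l) x := by
      conv_rhs => unfold ff
      refine Finset.le_inf' _ _ fun i hi => ?_
      refine le_trans ?_ (hkl x i)
      exact add_le_add (Finset.inf'_le _ hi) (Finset.inf'_le _ hi)
    have h5 : (fun j => x (k + r + j)) = fun j => (fun j => x (k + j)) (r + j) := by
      funext j; simp [add_assoc]
    rw [h5]; linarith
  calc _ = ex (-(2*w*r)) * (ex (-(ε*k)) * JJ S ν u (GG W k) * c) := by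
        rw [sub_eq_add_neg, ex_add]; ring
    _ ≤ ex (-(2*w*r)) * (ex (2*w*r) * JJ S ν u (GG W'' (k + l))) := by
        exact mul_le_mul' le_rfl (h1.trans h2)
    _ = _ := by rw [← mul_assoc, mul_comm (ex (-_)), ex_mul_neg, one_mul]

/-- exponential growth rate -/
def IsPsi (S : H → H) (ν : Measure (ℕ → H)) (A : Set H) (W : ι → (ℕ → H) → ℝ) (ψ : ℝ) : Prop :=
  ∀ ε : ℝ, 0 < ε → ∀ᶠ k : ℕ in atTop, ∀ u ∈ A,
    ex (k * (ψ - ε)) ≤ JJ S ν u (GG W k) ∧ JJ S ν u (GG W k) ≤ ex (k * (ψ + ε))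

lemma ev_const (C : ℝ) {ε : ℝ} (hε : 0 < ε) : ∀ᶠ k : ℕ in atTop, C ≤ ε * k := by
  have : Tendsto (fun k : ℕ => ε * (k:ℝ)) atTop atTop :=
    Tendsto.const_mul_atTop hε tendsto_natCast_atTop_atTop
  exact this.eventually_ge_atTop C

lemma exists_psi [IsProbabilityMeasure μ] [IsProbabilityMeasure ν] (hC : MC S μ ν A)
    {W : ι → (ℕ → H) → ℝ} {w : ℝ} (hW : Fam W w) : ∃ ψ, IsPsi S ν A W ψ := by
  set m : ℕ → ℝ≥0∞ := fun k => ⨅ u ∈ A, JJ S ν u (GG W k) with hm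
  have hm1 : ∀ k, ∀ u ∈ A, m k ≤ JJ S ν u (GG W k) := fun k u hu => iInf₂_le u hu
  have hlo : ∀ k : ℕ, ex (-(k*w)) ≤ m k := fun k => le_iInf₂ fun u hu => (JJ_bd hW k u).1
  have hup : ∀ k : ℕ, m k ≤ ex (k*w) := fun k => by
    obtain ⟨v, hv⟩ := hC.ne
    exact (hm1 k v hv).trans (JJ_bd hW k v).2
  have : ∀ k, ∃ x, m k = ex x := fun k =>
    ex_exists ((ex_pos _).trans_le (hlo k)).ne' (ne_top_of_le_ne_top (ex_ne_top _) (hup k))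
  choose a ha using this
  obtain ⟨ψ, hψ⟩ := fekete_approx a w 0 hW.nonneg le_rfl (by
      intro k
      have h1 := hlo k
      have h2 := hup k
      rw [ha, ex_le] at h1 h2
      rw [abs_le]; constructor <;> linarith) (by
      intro ε hε
      obtain ⟨C, h⟩ := super_fam hC hW hW hW hε
      refine ⟨C, fun k l => ?_⟩
      rw [← ex_le, ← ha (k+l)]
      refine le_iInf₂ fun u hu => ?_
      refine le_trans ?_ (h k l (fun x i => (SS_add k l x i).ge) (m l) (hm1 l) u hu)
      rw [show a k + a l - ε * k - C = (-(ε * k) - C) + a k + a l by ring, ex_add, ex_add,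
        ← ha k, ← ha l]
      gcongr
      exact hm1 k u hu)
  refine ⟨ψ, fun ε hε => ?_⟩
  obtain ⟨C, hCc⟩ := harnack hC hW (half_pos (half_pos hε))
  filter_upwards [hψ (ε/2) (by positivity), ev_const C (half_pos (half_pos hε))] with k h1 h2 u hu
  constructor
  · refine le_trans (ex_le.2 ?_) ((ha k).ge.trans (hm1 k u hu))
    have : (0:ℝ) ≤ k := by positivity
    nlinarith [h1.1]
  · have h3 : ex (-(ε/2/2*k + C)) * JJ S ν u (GG W k) ≤ m k := by
      refine le_iInf₂ fun u' hu' => ?_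
      calc _ ≤ ex (-(ε/2/2*k + C)) * (ex (ε/2/2*k + C) * JJ S ν u' (GG W k)) := by
            refine mul_le_mul' le_rfl (hCc k u hu u' hu')
        _ = _ := by rw [← mul_assoc, mul_comm (ex (-_)), ex_mul_neg, one_mul]
    calc JJ S ν u (GG W k) = ex (ε/2/2*k + C) * (ex (-(ε/2/2*k + C)) * JJ S ν u (GG W k)) := by
          rw [← mul_assoc, ex_mul_neg, one_mul]
      _ ≤ ex (ε/2/2*k + C) * m k := by gcongr
      _ ≤ _ := by
        rw [ha, ← ex_add, ex_le]
        nlinarith [h1.2]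

/-- the growth rate as a function -/
def Ps (S : H → H) (ν : Measure (ℕ → H)) (A : Set H) (W : ι → (ℕ → H) → ℝ) : ℝ :=
  open Classical in if h : ∃ ψ, IsPsi S ν A W ψ then h.choose else 0

lemma Ps_spec [IsProbabilityMeasure μ] [IsProbabilityMeasure ν] (hC : MC S μ ν A)
    {W : ι → (ℕ → H) → ℝ} {w : ℝ} (hW : Fam W w) : IsPsi S ν A W (Ps S ν A W) := by
  have h := exists_psi hC hW
  unfold Ps
  rw [dif_pos h]
  exact h.choose_spec

lemma le_of_ev {a b C : ℝ} (hf : ∃ᶠ k : ℕ in atTop, k * a ≤ k * b + C) : a ≤ b := by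
  by_contra h
  push Not at h
  have h2 := ev_const (C+1) (ε := a - b) (by linarith)
  obtain ⟨k, h3, h4⟩ := (hf.and_eventually h2).exists
  nlinarith

lemma psi_le (hne : A.Nonempty) {W : ι → (ℕ → H) → ℝ} {W' : ι' → (ℕ → H) → ℝ} {ψ ψ' t : ℝ}
    (h : IsPsi S ν A W ψ) (h' : IsPsi S ν A W' ψ')
    (hh : ∀ ε : ℝ, 0 < ε → ∃ C : ℝ, ∃ᶠ k : ℕ in atTop, ∀ u ∈ A,
      JJ S ν u (GG W k) ≤ ex (k * (t + ε) + C) * JJ S ν u (GG W' k)) : ψ ≤ ψ' + t := by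
  refine le_of_forall_pos_le_add fun ε hε => ?_
  obtain ⟨C, hCf⟩ := hh (ε/3) (by positivity)
  obtain ⟨v, hv⟩ := hne
  refine le_of_ev (C := C) ?_
  refine (hCf.and_eventually ((h (ε/3) (by positivity)).and (h' (ε/3) (by positivity)))).mono ?_
  rintro k ⟨h1, h2, h3⟩
  have := ((h2 v hv).1.trans (h1 v hv)).trans (mul_le_mul' le_rfl (h3 v hv).2)
  rw [← ex_add, ex_le] at this
  linarith

lemma psi_le' [IsProbabilityMeasure μ] [IsProbabilityMeasure ν] (hC : MC S μ ν A)
    {W : ι → (ℕ → H) → ℝ} {W' : ι' → (ℕ → H) → ℝ} {ψ ψ' t C : ℝ}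
    (h : IsPsi S ν A W ψ) (h' : IsPsi S ν A W' ψ')
    (hh : ∀ k : ℕ, ∀ x : ℕ → H, (∀ n, x n ∈ A) → ff W k x ≤ ff W' k x + k * t + C) : ψ ≤ ψ' + t := by
  refine psi_le hC.ne h h' fun ε hε => ⟨C, Frequently.of_forall fun k u hu => ?_⟩
  rw [← JJ_const_mul (ex_ne_top _)]
  refine JJ_mono hC hu fun x hx => ?_
  unfold GG
  rw [← ex_add, ex_le]
  have := hh k x hx
  have : 0 ≤ k * ε := by positivity
  linarith

/-- translated family -/
def trl (W : ι → (ℕ → H) → ℝ) (z : ι → ℝ) : ι → (ℕ → H) → ℝ := fun i x => W i x - z i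

lemma Fam.trl {W : ι → (ℕ → H) → ℝ} {w : ℝ} (hW : Fam W w) {z : ι → ℝ} {w' : ℝ}
    (hz : ‖z‖ ≤ w') : Fam (trl W z) (w + w') := by
  refine ⟨fun i => (hW.cont i).sub continuous_const, fun i x => ?_⟩
  have h1 := hW.bd i x
  have h2 := (norm_le_pi_norm z i).trans hz
  rw [Real.norm_eq_abs] at h2
  exact (abs_sub _ _).trans (add_le_add h1 h2)

lemma SS_trl (W : ι → (ℕ → H) → ℝ) (z : ι → ℝ) (k : ℕ) (x : ℕ → H) (i : ι) :
    SS (trl W z) k x i = SS W k x i - k * z i := by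
  simp [SS, trl, Finset.sum_sub_distrib]

lemma Ps_trl_le [IsProbabilityMeasure μ] [IsProbabilityMeasure ν] (hC : MC S μ ν A)
    {W : ι → (ℕ → H) → ℝ} {w : ℝ} (hW : Fam W w) {z z' : ι → ℝ} {t : ℝ} (h : ∀ i, z i ≤ z' i + t) :
    Ps S ν A (trl W z') ≤ Ps S ν A (trl W z) + t := by
  refine psi_le' hC (C := 0) (Ps_spec hC (hW.trl le_rfl)) (Ps_spec hC (hW.trl le_rfl)) ?_
  intro k x hx
  rw [add_zero]
  refine inf_mono fun i => ?_
  rw [SS_trl, SS_trl]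
  have := mul_le_mul_of_nonneg_left (h i) (Nat.cast_nonneg (α := ℝ) k)
  linarith

lemma Ps_mid [IsProbabilityMeasure μ] [IsProbabilityMeasure ν] (hC : MC S μ ν A)
    {W : ι → (ℕ → H) → ℝ} {w : ℝ} (hW : Fam W w) (z z' : ι → ℝ) :
    (Ps S ν A (trl W z) + Ps S ν A (trl W z')) / 2 ≤ Ps S ν A (trl W ((2⁻¹ : ℝ) • (z + z'))) := by
  have hn : 0 ≤ ‖z‖ := norm_nonneg _
  have hn' : 0 ≤ ‖z'‖ := norm_nonneg _
  have hF1 : Fam (trl W z) (w + (‖z‖+‖z'‖)) := hW.trl (by linarith)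
  have hF2 : Fam (trl W z') (w + (‖z‖+‖z'‖)) := hW.trl (by linarith)
  have hF3 : Fam (trl W ((2⁻¹ : ℝ) • (z + z'))) (w + (‖z‖+‖z'‖)) := hW.trl (by
    rw [norm_smul]
    have := norm_add_le z z'
    rw [Real.norm_of_nonneg (by norm_num)]
    linarith)
  suffices Ps S ν A (trl W z) + Ps S ν A (trl W z') ≤ 2 * Ps S ν A (trl W ((2⁻¹ : ℝ) • (z + z'))) by linarith
  refine le_of_forall_pos_le_add fun ε hε => ?_
  obtain ⟨C, h⟩ := super_fam hC hF1 hF2 hF3 (ε := ε/5) (by positivity)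
  refine le_of_ev (C := C) (Eventually.frequently ?_)
  have h1 := Ps_spec hC hF1 (ε/5) (by positivity)
  have h2 := Ps_spec hC hF2 (ε/5) (by positivity)
  have h3 := (tendsto_id.atTop_add_atTop tendsto_id : Tendsto (fun k : ℕ => k + k) atTop atTop).eventually
    (Ps_spec hC hF3 (ε/5) (by positivity))
  filter_upwards [h1, h2, h3] with k h1 h2 h3
  obtain ⟨v, hv⟩ := hC.ne
  have h4 := (h k k (by
    intro x i
    rw [SS_trl, SS_trl, SS_trl, SS_add]
    simp
    linarith) _ (fun v hv => (h2 v hv).1) v hv).trans (h3 v hv).2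
  have h5 := (mul_le_mul' (mul_le_mul' (le_refl (ex (-(ε/5 * k) - C))) (h1 v hv).1) le_rfl).trans h4
  rw [← ex_add, ← ex_add, ex_le] at h5
  simp only [id] at h5
  push_cast at h5
  linarith

end psi

section mmax
variable [SecondCountableTopology H] [MeasurableSpace H] [BorelSpace H]
  {S : H → H} {μ : Measure H} {ν : Measure (ℕ → H)} {A : Set H}
variable {ι : Type} [Fintype ι] [Nonempty ι]

/-- single family -/
def sg (V : (ℕ → H) → ℝ) : Unit → (ℕ → H) → ℝ := fun _ => V

lemma ff_sg (V : (ℕ → H) → ℝ) (k : ℕ) (x : ℕ → H) :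
    ff (sg V) k x = ∑ n ∈ Finset.range k, V (fun j => x (n + j)) := by
  simp [ff, SS, sg]

lemma supergrad [IsProbabilityMeasure μ] [IsProbabilityMeasure ν] (hC : MC S μ ν A)
    {W : ι → (ℕ → H) → ℝ} {w : ℝ} (hW : Fam W w) : ∃ lam : ι → ℝ, (∀ i, 0 ≤ lam i) ∧
      ∑ i, lam i = 1 ∧ ∀ z : ι → ℝ, Ps S ν A (trl W z) ≤ Ps S ν A (trl W 0) - ∑ i, lam i * z i := by
  classical
  set f : (ι → ℝ) → ℝ := fun z => Ps S ν A (trl W z) with hf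
  have hle : ∀ (z z' : ι → ℝ) (t : ℝ), (∀ i, z i ≤ z' i + t) → f z' ≤ f z + t :=
    fun z z' t h => Ps_trl_le hC hW h
  have hmid : ∀ z z', (f z + f z') / 2 ≤ f ((2⁻¹ : ℝ) • (z + z')) := fun z z' => Ps_mid hC hW z z'
  have hcont : Continuous f := by
    have : LipschitzWith 1 f := by
      refine LipschitzWith.of_le_add fun z z' => ?_
      refine hle z' z _ fun i => ?_
      have := dist_le_pi_dist z z' i
      rw [Real.dist_eq] at this
      linarith [(abs_le.1 this).1]
    exact this.continuous
  set D : Set (ι → ℝ) := {z | f 0 ≤ f z} with hD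
  have hDc : IsClosed D := isClosed_le continuous_const hcont
  have hDconv : Convex ℝ D := by
    refine convex_of_midpoint hDc fun x hx y hy => ?_
    have h1 : f 0 ≤ f x := hx
    have h2 : f 0 ≤ f y := hy
    exact le_trans (by linarith) (hmid x y)
  set O : Set (ι → ℝ) := {z | ∀ i, 0 < z i} with hO
  have hOo : IsOpen O := by
    have : O = ⋂ i, {z | 0 < z i} := by ext; simp [hO]
    rw [this]
    exact isOpen_iInter_of_finite fun i => isOpen_lt continuous_const (continuous_apply i)
  have hOc : Convex ℝ O := by
    intro x hx y hy a b ha hb hab i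
    have h1 := hx i
    have h2 := hy i
    simp only [Pi.add_apply, Pi.smul_apply, smul_eq_mul]
    rcases ha.eq_or_lt with rfl | ha
    · obtain rfl : b = 1 := by linarith
      linarith
    · have := mul_pos ha h1
      have := mul_nonneg hb h2.le
      linarith
  have hdisj : Disjoint O D := by
    rw [Set.disjoint_left]
    intro z hz hzD
    have hm : 0 < Finset.univ.inf' Finset.univ_nonempty z := by
      rw [Finset.lt_inf'_iff]; exact fun i _ => hz i
    have := hle 0 z (-(Finset.univ.inf' Finset.univ_nonempty z)) (fun i => by
      have := Finset.inf'_le z (Finset.mem_univ i)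
      simp only [Pi.zero_apply]; linarith)
    have h2 : f 0 ≤ f z := hzD
    linarith
  obtain ⟨l, u, hlO, hlD⟩ := geometric_hahn_banach_open hOc hOo hDconv hdisj
  have hu0 : u ≤ 0 := by
    have := hlD 0 (by simp [hD])
    simpa using this
  have hl1 : l 1 < 0 := (hlO 1 (by intro i; simp)).trans_le hu0
  have hclos : ∀ z : ι → ℝ, (∀ i, 0 ≤ z i) → l z ≤ 0 := by
    intro z hz
    refine le_of_forall_pos_le_add fun ε hε => ?_
    have h1 : l (z + (ε / (-(l 1))) • 1) < u := hlO _ (fun i => by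
      have := hz i
      have h3 : 0 < ε / (-(l 1)) := div_pos hε (by linarith)
      simp only [Pi.add_apply, Pi.smul_apply, Pi.one_apply, smul_eq_mul, mul_one]
      linarith)
    rw [map_add, map_smul, smul_eq_mul] at h1
    have : ε / (-(l 1)) * l 1 = -ε := by have := hl1.ne; field_simp
    linarith
  have hu : u = 0 := by
    refine le_antisymm hu0 ?_
    refine le_of_forall_pos_le_add fun ε hε => ?_
    have h1 : l ((ε / (-(l 1))) • 1) < u := hlO _ (fun i => by
      have h3 : 0 < ε / (-(l 1)) := div_pos hε (by linarith)
      simpa using h3)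
    rw [map_smul, smul_eq_mul] at h1
    have : ε / (-(l 1)) * l 1 = -ε := by have := hl1.ne; field_simp
    linarith
  have hlz : ∀ z : ι → ℝ, l z = ∑ i, z i * l (Pi.single i 1) := by
    intro z
    conv_lhs => rw [pi_eq_sum_univ' z]
    rw [map_sum]
    refine Finset.sum_congr rfl fun i _ => ?_
    rw [map_smul, smul_eq_mul]
  set c := -(l 1) with hc
  have hc0 : 0 < c := by rw [hc]; linarith
  have hlam : ∀ z : ι → ℝ, ∑ i, (-(l (Pi.single i 1)) / c) * z i = - l z / c := by
    intro z
    rw [hlz z, ← Finset.sum_neg_distrib, Finset.sum_div]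
    exact Finset.sum_congr rfl fun i _ => by ring
  refine ⟨fun i => -(l (Pi.single i 1)) / c, ?_, ?_, ?_⟩
  · intro i
    refine div_nonneg ?_ hc0.le
    have := hclos (Pi.single i 1) (fun j => by
      by_cases h : j = i
      · subst h; simp
      · simp [h])
    linarith
  · have := hlam 1
    simp only [Pi.one_apply, mul_one] at this
    rw [this, ← hc, div_self hc0.ne']
  · intro z
    simp only
    rw [hlam]
    set t := f z - f 0 with ht
    have h1 := hle (z + t • 1) z t (fun i => by simp)
    have h2 : z + t • 1 ∈ D := by
      show f 0 ≤ f (z + t • 1)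
      linarith
    have h3 := hlD _ h2
    rw [hu, map_add, map_smul, smul_eq_mul] at h3
    have h4 : t ≤ l z / c := by
      rw [le_div_iff₀ hc0, hc]; linarith
    show f z ≤ f 0 - _
    rw [neg_div]; linarith

lemma trl_zero (W : ι → (ℕ → H) → ℝ) : trl W 0 = W := by
  funext i x; simp [trl]

lemma minimax [IsProbabilityMeasure μ] [IsProbabilityMeasure ν] (hC : MC S μ ν A)
    {W : ι → (ℕ → H) → ℝ} {w : ℝ} (hW : Fam W w) : ∃ lam : ι → ℝ, (∀ i, 0 ≤ lam i) ∧
      ∑ i, lam i = 1 ∧ Ps S ν A (sg (fun x => ∑ i, lam i * W i x)) ≤ Ps S ν A W := by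
  obtain ⟨lam, h0, h1, hz⟩ := supergrad hC hW
  refine ⟨lam, h0, h1, ?_⟩
  rw [trl_zero] at hz
  have hF : Fam (sg (fun x => ∑ i, lam i * W i x)) w := by
    refine ⟨fun _ => ?_, fun _ x => ?_⟩
    · exact continuous_finsetSum _ fun i _ => continuous_const.mul (hW.cont i)
    · calc |∑ i, lam i * W i x| ≤ ∑ i, |lam i * W i x| := Finset.abs_sum_le_sum_abs _ _
        _ ≤ ∑ i, lam i * w := Finset.sum_le_sum fun i _ => by
            rw [abs_mul, abs_of_nonneg (h0 i)]
            exact mul_le_mul_of_nonneg_left (hW.bd i x) (h0 i)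
        _ = w := by rw [← Finset.sum_mul, h1, one_mul]
  set Q := Ps S ν A (sg (fun x => ∑ i, lam i * W i x)) with hQ
  refine le_of_forall_pos_le_add fun ε' hε' => ?_
  obtain ⟨ε, hε, rfl⟩ : ∃ ε, 0 < ε ∧ ε' = 4 * ε := ⟨ε'/4, by positivity, by ring⟩
  have hcomp : TotallyBounded (Metric.closedBall (0 : ι → ℝ) w) :=
    (isCompact_closedBall _ _).totallyBounded
  obtain ⟨t, ht, hcov⟩ := Metric.totallyBounded_iff.1 hcomp ε hε
  lift t to Finset (ι → ℝ) using ht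
  have hpt : ∀ k : ℕ, 0 < k → ∀ x : ℕ → H, GG (sg (fun x => ∑ i, lam i * W i x)) k x ≤
      ∑ z ∈ t, ex (k * ((∑ i, lam i * z i) + 2 * ε)) * GG (trl W z) k x := by
    intro k hk x
    have hk' : (0:ℝ) < k := by exact_mod_cast hk
    set Y : ι → ℝ := fun i => SS W k x i / k with hY
    have hYm : Y ∈ Metric.closedBall (0 : ι → ℝ) w := by
      rw [mem_closedBall_zero_iff, pi_norm_le_iff_of_nonneg hW.nonneg]
      intro i
      rw [hY, Real.norm_eq_abs, abs_div, abs_of_pos hk', div_le_iff₀ hk']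
      have := SS_bd hW k x i
      linarith
    have := hcov hYm
    simp only [Set.mem_iUnion] at this
    obtain ⟨z, hzt, hzb⟩ := this
    have hzb' : ∀ i, |Y i - z i| ≤ ε := fun i => by
      have := (dist_le_pi_dist Y z i).trans (le_of_lt hzb)
      rwa [Real.dist_eq] at this
    refine le_trans ?_ (Finset.single_le_sum (f := fun z => ex (k * ((∑ i, lam i * z i) + 2 * ε)) * GG (trl W z) k x) (fun _ _ => zero_le) hzt)
    unfold GG
    rw [← ex_add, ex_le, ff_sg]
    have e1 : ∑ n ∈ Finset.range k, ∑ i, lam i * W i (fun j => x (n + j)) = k * ∑ i, lam i * Y i := by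
      rw [Finset.sum_comm, Finset.mul_sum]
      refine Finset.sum_congr rfl fun i _ => ?_
      rw [← Finset.mul_sum, hY]
      simp only [SS]
      field_simp
    have e2 : -(k * ε) ≤ ff (trl W z) k x := by
      unfold ff
      refine Finset.le_inf' _ _ fun i _ => ?_
      rw [SS_trl]
      have : SS W k x i = k * Y i := by rw [hY]; field_simp
      rw [this]
      have := mul_le_mul_of_nonneg_left (abs_le.1 (hzb' i)).1 hk'.le
      linarith
    have e3 : ∑ i, lam i * Y i ≤ (∑ i, lam i * z i) + ε := by
      calc ∑ i, lam i * Y i ≤ ∑ i, (lam i * z i + lam i * ε) := Finset.sum_le_sum fun i _ => by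
            have := mul_le_mul_of_nonneg_left (abs_le.1 (hzb' i)).2 (h0 i)
            linarith
        _ = _ := by rw [Finset.sum_add_distrib, ← Finset.sum_mul, h1, one_mul]
    rw [e1]
    have := mul_le_mul_of_nonneg_left e3 hk'.le
    linarith
  refine le_of_ev (C := Real.log (t.card + 1)) (Eventually.frequently ?_)
  have hev : ∀ᶠ k : ℕ in atTop, ∀ z ∈ t, ∀ u ∈ A, JJ S ν u (GG (trl W z) k) ≤ ex (k * (Ps S ν A (trl W z) + ε)) := by
    rw [Filter.eventually_all_finset]
    intro z _
    filter_upwards [Ps_spec hC (hW.trl (z := z) le_rfl) ε hε] with k hk u hu using (hk u hu).2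
  filter_upwards [hev, Ps_spec hC hF ε hε, eventually_gt_atTop 0] with k h2 h3 hk
  obtain ⟨v, hv⟩ := hC.ne
  have h4 : JJ S ν v (GG (sg (fun x => ∑ i, lam i * W i x)) k) ≤ ex (Real.log (t.card + 1)) * ex (k * (Ps S ν A W + 3 * ε)) := by
    calc _ ≤ JJ S ν v (fun x => ∑ z ∈ t, ex (k * ((∑ i, lam i * z i) + 2 * ε)) * GG (trl W z) k x) :=
          JJ_mono hC hv fun x _ => hpt k hk x
      _ = ∑ z ∈ t, ex (k * ((∑ i, lam i * z i) + 2 * ε)) * JJ S ν v (GG (trl W z) k) := by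
          unfold JJ
          rw [lintegral_finsetSum]
          · refine Finset.sum_congr rfl fun z _ => ?_
            rw [lintegral_const_mul' _ _ (ex_ne_top _)]
          · intro z _
            refine Measurable.const_mul ?_ _
            refine (GG_meas (hW.trl (z := z) le_rfl) k).comp ?_
            exact ((pth_cont hC.cont).comp (Continuous.prodMk continuous_const continuous_id)).measurable
      _ ≤ ∑ z ∈ t, ex (k * (Ps S ν A W + 3 * ε)) := by
          refine Finset.sum_le_sum fun z hzt => ?_
          refine (mul_le_mul' le_rfl (h2 z hzt v hv)).trans ?_
          rw [← ex_add, ex_le]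
          have := mul_le_mul_of_nonneg_left (hz z) (Nat.cast_nonneg (α := ℝ) k)
          linarith
      _ ≤ _ := by
          rw [Finset.sum_const, nsmul_eq_mul]
          gcongr
          unfold ex
          rw [Real.exp_log (by positivity), ← ENNReal.ofReal_natCast]
          exact ENNReal.ofReal_le_ofReal (by linarith)
  have h5 := (h3 v hv).1.trans h4
  rw [← ex_add, ex_le] at h5
  linarith
end mmax

lemma log_ex (x : ℝ) : ENNReal.log (ex x) = (x : EReal) := by
  unfold ex
  rw [ENNReal.log_ofReal_of_pos (Real.exp_pos x), Real.log_exp]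

lemma limsup_le_of_ex {p : ℕ → ℝ≥0∞} {t : ℝ} (h : ∀ᶠ k : ℕ in atTop, p k ≤ ex (k * t)) :
    Filter.limsup (fun k : ℕ => (((k : ℝ)⁻¹ : ℝ) : EReal) * ENNReal.log (p k)) atTop ≤ (t : EReal) := by
  refine Filter.limsup_le_of_le (by isBoundedDefault) ?_
  filter_upwards [h, eventually_gt_atTop 0] with k hk hk0
  have hk' : (0:ℝ) < k := by exact_mod_cast hk0
  calc (((k : ℝ)⁻¹ : ℝ) : EReal) * ENNReal.log (p k)
      ≤ (((k : ℝ)⁻¹ : ℝ) : EReal) * ENNReal.log (ex (k * t)) := by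
        refine mul_le_mul_of_nonneg_left (ENNReal.log_le_log hk) ?_
        exact_mod_cast (inv_pos.2 hk').le
    _ = t := by
        rw [log_ex, ← EReal.coe_mul]; congr 1; field_simp

lemma le_liminf_of_ex {p : ℕ → ℝ≥0∞} {t : ℝ} (h : ∀ᶠ k : ℕ in atTop, ex (k * t) ≤ p k) :
    (t : EReal) ≤ Filter.liminf (fun k : ℕ => (((k : ℝ)⁻¹ : ℝ) : EReal) * ENNReal.log (p k)) atTop := by
  refine Filter.le_liminf_of_le (by isBoundedDefault) ?_
  filter_upwards [h, eventually_gt_atTop 0] with k hk hk0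
  have hk' : (0:ℝ) < k := by exact_mod_cast hk0
  calc (t : EReal) = (((k : ℝ)⁻¹ : ℝ) : EReal) * ENNReal.log (ex (k * t)) := by
        rw [log_ex, ← EReal.coe_mul]; congr 1; field_simp
    _ ≤ _ := by
        refine mul_le_mul_of_nonneg_left (ENNReal.log_le_log hk) ?_
        exact_mod_cast (inv_pos.2 hk').le

section gen
variable {Z : Type} [TopologicalSpace Z] [TopologicalSpace.MetrizableSpace Z]
  [MeasurableSpace Z] [BorelSpace Z]

lemma occ_integral (V : Z →ᵇ ℝ) (x : ℕ → Z) {k : ℕ} (hk : 0 < k) :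
    ∫ z, V z ∂(occ x k : Measure Z) = (k:ℝ)⁻¹ * ∑ n ∈ Finset.range k, V (x n) := by
  have h : (occ x k : Measure Z) = (k : ℝ≥0∞)⁻¹ • ∑ n ∈ Finset.range k, Measure.dirac (x n) := by
    exact congrArg Subtype.val (dif_neg hk.ne')
  rw [h, integral_smul_measure, integral_finsetSum_measure]
  · simp only [integral_dirac, smul_eq_mul, ENNReal.toReal_inv, ENNReal.toReal_natCast]
  · intro n _
    exact V.integrable _

lemma occ_compl (X : Set Z) (hX : MeasurableSet X) (x : ℕ → Z) (hx : ∀ n, x n ∈ X) {k : ℕ} (hk : 0 < k) :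
    (occ x k : Measure Z) Xᶜ = 0 := by
  have h : (occ x k : Measure Z) = (k : ℝ≥0∞)⁻¹ • ∑ n ∈ Finset.range k, Measure.dirac (x n) := by
    exact congrArg Subtype.val (dif_neg hk.ne')
  rw [h]
  simp [Measure.smul_apply, Measure.finsetSum_apply, Measure.dirac_apply' _ hX.compl, hx]

lemma basic_nhd {U : Set (ProbabilityMeasure Z)} {σ : ProbabilityMeasure Z} (hU : U ∈ 𝓝 σ) :
    ∃ (T : Finset (Z →ᵇ ℝ)) (ε : ℝ), 0 < ε ∧ ∀ τ : ProbabilityMeasure Z,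
      (∀ V ∈ T, |∫ z, V z ∂(τ : Measure Z) - ∫ z, V z ∂(σ : Measure Z)| < ε) → τ ∈ U := by
  classical
  set L : Filter (ProbabilityMeasure Z) := ⨅ V : Z →ᵇ ℝ,
    Filter.comap (fun τ : ProbabilityMeasure Z => ∫ z, V z ∂(τ : Measure Z))
      (𝓝 (∫ z, V z ∂(σ : Measure Z))) with hL
  have ht : Tendsto (fun τ : ProbabilityMeasure Z => τ) L (𝓝 σ) := by
    rw [ProbabilityMeasure.tendsto_iff_forall_integral_tendsto]
    intro V
    exact tendsto_iff_comap.2 (iInf_le _ V)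
  have hUL : U ∈ L := ht hU
  rw [hL, Filter.mem_iInf] at hUL
  obtain ⟨I, hI, B, hB, rfl⟩ := hUL
  have : ∀ i : I, ∃ ε : ℝ, 0 < ε ∧ ∀ τ : ProbabilityMeasure Z,
      |∫ z, (i : Z →ᵇ ℝ) z ∂(τ : Measure Z) - ∫ z, (i : Z →ᵇ ℝ) z ∂(σ : Measure Z)| < ε → τ ∈ B i := by
    intro i
    obtain ⟨t, ht, htB⟩ := hB i
    obtain ⟨ε, hε, hb⟩ := Metric.mem_nhds_iff.1 ht
    refine ⟨ε, hε, fun τ hτ => htB (hb ?_)⟩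
    rw [Metric.mem_ball, Real.dist_eq]; exact hτ
  choose e he hB' using this
  have hfin : Finite I := hI
  have hev : ∀ᶠ ε : ℝ in 𝓝[>] 0, ∀ i : I, ε < e i := by
    rw [Filter.eventually_all]
    intro i
    exact mem_nhdsWithin_of_mem_nhds (Iio_mem_nhds (he i))
  obtain ⟨ε, h1, h2⟩ := (hev.and self_mem_nhdsWithin).exists
  refine ⟨hI.toFinset, ε, h2, fun τ hτ => ?_⟩
  rw [Set.mem_iInter]
  intro i
  exact hB' i τ ((hτ i (by simp)).trans (h1 i))

lemma goodRate_of (Q : (Z →ᵇ ℝ) → ℝ) {X : Set Z} (hX : IsCompact X) (hne : X.Nonempty)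
    (hQ : ∀ V : Z →ᵇ ℝ, (∀ z ∈ X, V z = 0) → Q V ≤ 0) :
    GoodRate (fun σ : ProbabilityMeasure Z =>
        ⨆ V : Z →ᵇ ℝ, ENNReal.ofReal ((∫ x, V x ∂(σ : Measure Z)) - Q V)) ∧
    IsCompact {σ : ProbabilityMeasure Z | (σ : Measure Z) Xᶜ = 0} ∧
    ∀ σ : ProbabilityMeasure Z, (⨆ V : Z →ᵇ ℝ, ENNReal.ofReal ((∫ x, V x ∂(σ : Measure Z)) - Q V)) ≠ ⊤ →
      (σ : Measure Z) Xᶜ = 0 := by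
  let _ := TopologicalSpace.metrizableSpaceMetric Z
  have hlsc : LowerSemicontinuous (fun σ : ProbabilityMeasure Z =>
        ⨆ V : Z →ᵇ ℝ, ENNReal.ofReal ((∫ x, V x ∂(σ : Measure Z)) - Q V)) := by
    refine lowerSemicontinuous_iSup fun V => ?_
    refine Continuous.lowerSemicontinuous ?_
    exact ENNReal.continuous_ofReal.comp
      ((ProbabilityMeasure.continuous_integral_boundedContinuousFunction V).sub continuous_const)
  have hcomp : IsCompact {σ : ProbabilityMeasure Z | (σ : Measure Z) Xᶜ = 0} := by
    have := isCompact_setOfPred_probabilityMeasure_mass_eq_compl_isCompact_le (E := Z)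
      (u := fun _ => 0) (K := fun _ => X) tendsto_const_nhds (fun _ => hX) (Or.inr monotone_const)
    convert this using 2
    ext σ
    simp only [nonpos_iff_eq_zero, forall_const]
    rw [ProbabilityMeasure.null_iff_toMeasure_null]
  have hsupp : ∀ σ : ProbabilityMeasure Z,
      (⨆ V : Z →ᵇ ℝ, ENNReal.ofReal ((∫ x, V x ∂(σ : Measure Z)) - Q V)) ≠ ⊤ →
      (σ : Measure Z) Xᶜ = 0 := by
    intro σ hσ
    by_contra hcon
    apply hσ
    let f : Z →ᵇ ℝ := BoundedContinuousFunction.ofNormedAddCommGroup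
      (fun z => min 1 (Metric.infDist z X)) (by fun_prop) 1 (by
        intro z
        rw [Real.norm_of_nonneg (le_min zero_le_one Metric.infDist_nonneg)]
        exact min_le_left _ _)
    have hf0 : ∀ z, 0 ≤ f z := fun z => le_min zero_le_one Metric.infDist_nonneg
    have hpos : 0 < ∫ z, f z ∂(σ : Measure Z) := by
      rw [integral_pos_iff_support_of_nonneg hf0 (f.integrable _)]
      refine lt_of_lt_of_le (pos_iff_ne_zero.2 hcon) (measure_mono ?_)
      intro z hz
      have : 0 < Metric.infDist z X :=
        (hX.isClosed.notMem_iff_infDist_pos hne).1 hz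
      exact (lt_min zero_lt_one this).ne'
    rw [iSup_eq_top]
    intro b hb
    obtain ⟨n, hn⟩ := exists_nat_gt (b.toReal / ∫ z, f z ∂(σ : Measure Z))
    refine ⟨(n : ℝ) • f, ?_⟩
    have hq : Q ((n:ℝ) • f) ≤ 0 := hQ _ (fun z hz => by
      have : Metric.infDist z X = 0 := Metric.infDist_zero_of_mem hz
      simp [f, this])
    have e : ∫ z, ((n:ℝ) • f) z ∂(σ : Measure Z) = n * ∫ z, f z ∂(σ : Measure Z) := by
      simp only [BoundedContinuousFunction.coe_smul, smul_eq_mul]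
      exact integral_const_mul _ _
    rw [e, ENNReal.lt_ofReal_iff_toReal_lt hb.ne]
    rw [div_lt_iff₀ hpos] at hn
    linarith
  refine ⟨⟨hlsc, fun c hc => ?_⟩, hcomp, hsupp⟩
  refine hcomp.of_isClosed_subset (hlsc.isClosed_preimage c) ?_
  intro σ hσ
  exact hsupp σ (ne_top_of_le_ne_top hc hσ)

end gen

section ldp
variable [SecondCountableTopology H] [MeasurableSpace H] [BorelSpace H]
  {S : H → H} {μ : Measure H} {ν : Measure (ℕ → H)} {A : Set H}
  {Ω : Type} [MeasurableSpace Ω] {P : Measure Ω} {Y : Ω → ℕ → H}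
  {Z : Type} [TopologicalSpace Z] [TopologicalSpace.MetrizableSpace Z]
  [MeasurableSpace Z] [BorelSpace Z] {θ : (ℕ → H) → Z}

lemma pth_meas (hS : Continuous S) (u : H) : Measurable (pth S u) :=
  ((pth_cont hS).comp (Continuous.prodMk continuous_const continuous_id)).measurable

lemma JJ_P (hS : Continuous S) (hY : Measurable Y) (hν : ν = P.map Y) (u : H)
    {g : (ℕ → H) → ℝ≥0∞} (hg : Measurable g) :
    JJ S ν u g = ∫⁻ ω, g (pth S u (Y ω)) ∂P := by
  unfold JJ
  rw [hν]; exact lintegral_map (hg.comp (pth_meas hS u)) hY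

/-- the pressure -/
def QQ (S : H → H) (ν : Measure (ℕ → H)) (A : Set H) (θ : (ℕ → H) → Z) (V : Z →ᵇ ℝ) : ℝ :=
  Ps S ν A (sg (V ∘ θ))

lemma fam_sg (hθ : Continuous θ) (V : Z →ᵇ ℝ) : Fam (sg (V ∘ θ)) ‖V‖ :=
  ⟨fun _ => V.continuous.comp hθ, fun _ x => V.norm_coe_le_norm _⟩

/-- the empirical measure -/
def emp (S : H → H) (Y : Ω → ℕ → H) (θ : (ℕ → H) → Z) (u : H) (k : ℕ) (ω : Ω) :
    ProbabilityMeasure Z := occ (fun n => θ (fun j => pth S u (Y ω) (n + j))) k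

lemma emp_integral (V : Z →ᵇ ℝ) (u : H) {k : ℕ} (hk : 0 < k) (ω : Ω) :
    k * ∫ z, V z ∂(emp S Y θ u k ω : Measure Z) = ff (sg (V ∘ θ)) k (pth S u (Y ω)) := by
  unfold emp
  rw [occ_integral V _ hk, ff_sg]
  have : (k:ℝ) ≠ 0 := by exact_mod_cast hk.ne'
  field_simp
  rfl

lemma QQ_nonpos [IsProbabilityMeasure μ] [IsProbabilityMeasure ν] (hC : MC S μ ν A)
    (hθ : Continuous θ) (V : Z →ᵇ ℝ)
    (hV : ∀ z ∈ θ '' {x | ∀ n, x n ∈ A}, V z = 0) : QQ S ν A θ V ≤ 0 := by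
  refine le_of_forall_pos_le_add fun ε hε => ?_
  rw [zero_add, ← sub_nonpos]
  refine le_of_ev (C := 0) (Eventually.frequently ?_)
  filter_upwards [Ps_spec hC (fam_sg hθ V) ε hε] with k hk
  obtain ⟨v, hv⟩ := hC.ne
  have h1 : JJ S ν v (GG (sg (V ∘ θ)) k) ≤ JJ S ν v (fun _ => 1) := by
    refine JJ_mono hC hv fun x hx => ?_
    unfold GG
    rw [ff_sg, Finset.sum_eq_zero, ex_zero]
    intro n _
    exact hV _ ⟨_, fun j => hx _, rfl⟩
  have h2 : JJ S ν v (fun _ => 1) = ex 0 := by simp [JJ, ex_zero]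
  have h3 := ((hk v hv).1.trans h1).trans h2.le
  rw [ex_le] at h3
  unfold QQ
  linarith

lemma X_comp [IsProbabilityMeasure μ] [IsProbabilityMeasure ν] (hC : MC S μ ν A)
    (hθ : Continuous θ) : IsCompact (θ '' {x | ∀ n, x n ∈ A}) ∧ (θ '' {x | ∀ n, x n ∈ A}).Nonempty := by
  constructor
  · refine IsCompact.image ?_ hθ
    have := isCompact_univ_pi (fun _ : ℕ => hC.comp)
    convert this using 1
    ext x; simp
  · obtain ⟨v, hv⟩ := hC.ne
    exact ⟨_, fun _ => v, fun _ => hv, rfl⟩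

lemma cheb [IsProbabilityMeasure P] (hS : Continuous S) (hY : Measurable Y) (hν : ν = P.map Y)
    (hθ : Continuous θ) (V : Z →ᵇ ℝ) (c : ℝ) (u : H) {k : ℕ} (hk : 0 < k) :
    P {ω | c < ∫ z, V z ∂(emp S Y θ u k ω : Measure Z)} ≤
      ex (-(k * c)) * JJ S ν u (GG (sg (V ∘ θ)) k) := by
  have hm := GG_meas (fam_sg hθ V) k
  rw [JJ_P hS hY hν u hm]
  have h1 := mul_meas_ge_le_lintegral (μ := P) (hm.comp ((pth_meas hS u).comp hY)) (ex (k * c))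
  have hk' : (0:ℝ) < k := by exact_mod_cast hk
  have h2 : P {ω | c < ∫ z, V z ∂(emp S Y θ u k ω : Measure Z)} ≤
      P {ω | ex (k * c) ≤ (GG (sg (V ∘ θ)) k ∘ pth S u ∘ Y) ω} := by
    refine measure_mono fun ω hω => ?_
    have hω : c < ∫ z, V z ∂(emp S Y θ u k ω : Measure Z) := hω
    show ex (k * c) ≤ ex (ff (sg (V ∘ θ)) k (pth S u (Y ω)))
    rw [ex_le, ← emp_integral V u hk ω]
    exact mul_le_mul_of_nonneg_left hω.le hk'.le
  calc _ ≤ ex (-(k*c)) * (ex (k*c) * P {ω | ex (k * c) ≤ (GG (sg (V ∘ θ)) k ∘ pth S u ∘ Y) ω}) := by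
        rw [← mul_assoc, mul_comm (ex (-_)), ex_mul_neg, one_mul]; exact h2
    _ ≤ _ := mul_le_mul' le_rfl h1

/-- rate function -/
def RR (S : H → H) (ν : Measure (ℕ → H)) (A : Set H) (θ : (ℕ → H) → Z)
    (σ : ProbabilityMeasure Z) : ℝ≥0∞ :=
  ⨆ V : Z →ᵇ ℝ, ENNReal.ofReal ((∫ x, V x ∂(σ : Measure Z)) - QQ S ν A θ V)

lemma upper [IsProbabilityMeasure P] [IsProbabilityMeasure μ] [IsProbabilityMeasure ν] (hC : MC S μ ν A)
    (hY : Measurable Y) (hν : ν = P.map Y) (hθ : Continuous θ) (Γ : Set (ProbabilityMeasure Z)) :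
    Filter.limsup
        (fun k : ℕ => (((k : ℝ)⁻¹ : ℝ) : EReal) * ENNReal.log (⨆ u ∈ A, P {ω | emp S Y θ u k ω ∈ Γ})) atTop
      ≤ -(⨅ σ ∈ closure Γ, (RR S ν A θ σ : EReal)) := by
  classical
  obtain ⟨hXc, hXn⟩ := X_comp hC hθ
  obtain ⟨hgood, hKc, hsupp⟩ := goodRate_of (QQ S ν A θ) hXc hXn (QQ_nonpos hC hθ)
  rw [EReal.le_neg]
  refine EReal.ge_of_forall_gt_iff_ge.1 ?_
  intro c hc
  have hlt : ∀ σ ∈ closure Γ, (c : EReal) < RR S ν A θ σ := fun σ hσ =>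
    hc.trans_le (iInf₂_le σ hσ)
  have hV : ∀ σ ∈ closure Γ, ∃ V : Z →ᵇ ℝ, c + QQ S ν A θ V < ∫ x, V x ∂(σ : Measure Z) := by
    intro σ hσ
    by_cases hc0 : c < 0
    · refine ⟨0, ?_⟩
      have := QQ_nonpos hC hθ 0 (by simp)
      simp; linarith
    · push Not at hc0
      have h1 := hlt σ hσ
      have h2 : ENNReal.ofReal c < RR S ν A θ σ := by
        rw [← EReal.coe_ennreal_lt_coe_ennreal_iff, EReal.coe_ennreal_ofReal, max_eq_left hc0]
        exact h1
      obtain ⟨V, hV⟩ := lt_iSup_iff.1 h2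
      rw [ENNReal.ofReal_lt_ofReal_iff_of_nonneg hc0] at hV
      exact ⟨V, by linarith⟩
  obtain ⟨T, hT⟩ := (hKc.inter_left isClosed_closure (s := closure Γ)).elim_finite_subcover
    (fun V : Z →ᵇ ℝ => {σ : ProbabilityMeasure Z | c + QQ S ν A θ V < ∫ x, V x ∂(σ : Measure Z)})
    (fun V => isOpen_lt continuous_const
      (ProbabilityMeasure.continuous_integral_boundedContinuousFunction V))
    (by
      rintro σ ⟨hσ, -⟩
      obtain ⟨V, h⟩ := hV σ hσ
      exact Set.mem_iUnion.2 ⟨V, h⟩)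
  rw [EReal.le_neg, ← EReal.coe_neg]
  refine EReal.le_of_forall_lt_iff_le.1 ?_
  intro d hd
  have hd' : -c < d := by exact_mod_cast hd
  obtain ⟨ε, hε, rfl⟩ : ∃ ε, 0 < ε ∧ d = -c + 2 * ε := ⟨(d + c)/2, by linarith, by ring⟩
  refine limsup_le_of_ex ?_
  have hev : ∀ᶠ k : ℕ in atTop, ∀ V ∈ T, ∀ u ∈ A,
      JJ S ν u (GG (sg (V ∘ θ)) k) ≤ ex (k * (QQ S ν A θ V + ε)) := by
    rw [Filter.eventually_all_finset]
    intro V _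
    filter_upwards [Ps_spec hC (fam_sg hθ V) ε hε] with k hk u hu using (hk u hu).2
  filter_upwards [hev, ev_const (Real.log (T.card + 1)) hε, eventually_gt_atTop 0] with k h1 h2 hk
  refine iSup₂_le fun u hu => ?_
  have hae : ∀ᵐ ω ∂P, ∀ n, pth S u (Y ω) n ∈ A := by
    have := path_mem hC hu
    rw [hν] at this
    exact ae_of_ae_map hY.aemeasurable this
  calc P {ω | emp S Y θ u k ω ∈ Γ}
      ≤ P (⋃ V ∈ T, {ω | c + QQ S ν A θ V < ∫ z, V z ∂(emp S Y θ u k ω : Measure Z)}) := by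
        refine measure_mono_ae ?_
        filter_upwards [hae] with ω hω hωΓ
        have hin : emp S Y θ u k ω ∈ closure Γ ∩ {σ : ProbabilityMeasure Z | (σ : Measure Z) (θ '' {x | ∀ n, x n ∈ A})ᶜ = 0} := by
          refine ⟨subset_closure hωΓ, ?_⟩
          exact occ_compl _ hXc.measurableSet _ (fun n => ⟨_, fun j => hω _, rfl⟩) hk
        have := hT hin
        simp only [Set.mem_iUnion] at this
        obtain ⟨V, hVT, h⟩ := this
        exact Set.mem_iUnion₂.2 ⟨V, hVT, h⟩
    _ ≤ ∑ V ∈ T, P {ω | c + QQ S ν A θ V < ∫ z, V z ∂(emp S Y θ u k ω : Measure Z)} :=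
        measure_biUnion_finset_le _ _
    _ ≤ ∑ V ∈ T, ex (k * (-c + ε)) := by
        refine Finset.sum_le_sum fun V hVT => ?_
        refine (cheb hC.cont hY hν hθ V _ u hk).trans ?_
        refine (mul_le_mul' le_rfl (h1 V hVT u hu)).trans ?_
        rw [← ex_add, ex_le]
        linarith
    _ ≤ ex (Real.log (T.card + 1)) * ex (k * (-c + ε)) := by
        rw [Finset.sum_const, nsmul_eq_mul]
        gcongr
        unfold ex
        rw [Real.exp_log (by positivity), ← ENNReal.ofReal_natCast]
        exact ENNReal.ofReal_le_ofReal (by linarith)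
    _ ≤ ex (k * (-c + 2 * ε)) := by
        rw [← ex_add, ex_le]; linarith
end ldp

section ldp2
variable [SecondCountableTopology H] [MeasurableSpace H] [BorelSpace H]
  {S : H → H} {μ : Measure H} {ν : Measure (ℕ → H)} {A : Set H}
  {Ω : Type} [MeasurableSpace Ω] {P : Measure Ω} {Y : Ω → ℕ → H}
  {Z : Type} [TopologicalSpace Z] [TopologicalSpace.MetrizableSpace Z]
  [MeasurableSpace Z] [BorelSpace Z] {θ : (ℕ → H) → Z}

lemma lower_pt [IsProbabilityMeasure P] [IsProbabilityMeasure μ] [IsProbabilityMeasure ν] (hC : MC S μ ν A)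
    (hY : Measurable Y) (hν : ν = P.map Y) (hθ : Continuous θ) (Γ : Set (ProbabilityMeasure Z))
    (σ : ProbabilityMeasure Z) (hσ : σ ∈ interior Γ) {s : ℝ} (hs : 0 ≤ s)
    (hQ : ∀ V : Z →ᵇ ℝ, (∫ x, V x ∂(σ : Measure Z)) - QQ S ν A θ V ≤ s) {ε : ℝ} (hε : 0 < ε) :
    ∀ᶠ k : ℕ in atTop, ex (k * (-(s + ε))) ≤ ⨅ u ∈ A, P {ω | emp S Y θ u k ω ∈ Γ} := by
  classical
  obtain ⟨T, ε0, hε0, hT⟩ := basic_nhd (mem_interior_iff_mem_nhds.1 hσ)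
  set C : ℝ := (s + ε) / ε0 with hCdef
  have hC0 : 0 < C := by positivity
  set sgn : Bool → ℝ := fun b => if b then 1 else -1 with hsgn
  let ι := {V : Z →ᵇ ℝ // V ∈ insert 0 T} × Bool
  haveI : Nonempty ι := ⟨(⟨0, Finset.mem_insert_self _ _⟩, true)⟩
  let m : (Z →ᵇ ℝ) → ℝ := fun V => ∫ z, V z ∂(σ : Measure Z)
  let U : ι → (Z →ᵇ ℝ) := fun i =>
    (sgn i.2 * C) • (i.1.1 - BoundedContinuousFunction.const Z (m i.1.1))
  let W : ι → (ℕ → H) → ℝ := fun i => U i ∘ θ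
  have hint : ∀ (τ : ProbabilityMeasure Z) (V : Z →ᵇ ℝ), Integrable (fun z => V z) (τ : Measure Z) :=
    fun τ V => V.integrable _
  have hUint : ∀ (i : ι) (τ : ProbabilityMeasure Z), ∫ z, U i z ∂(τ : Measure Z) =
      sgn i.2 * C * (∫ z, i.1.1 z ∂(τ : Measure Z) - m i.1.1) := by
    intro i τ
    have : ∀ z, U i z = sgn i.2 * C * (i.1.1 z - m i.1.1) := fun z => by simp [U]
    simp_rw [this]
    rw [integral_const_mul, integral_sub (hint _ _) (integrable_const _)]
    simp
  have hFam : Fam W (∑ i, ‖U i‖) := by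
    refine ⟨fun i => (U i).continuous.comp hθ, fun i x => ?_⟩
    exact ((U i).norm_coe_le_norm (θ x)).trans
      (Finset.single_le_sum (f := fun i => ‖U i‖) (fun i _ => norm_nonneg _) (Finset.mem_univ i))
  obtain ⟨lam, hl0, hl1, hmm⟩ := minimax hC hFam
  have hPs : -s ≤ Ps S ν A W := by
    let V : Z →ᵇ ℝ := ∑ i, lam i • U i
    have hV : (fun x => ∑ i, lam i * W i x) = V ∘ θ := by
      funext x; simp [V, W]
    have h1 := hQ V
    have h2 : ∫ x, V x ∂(σ : Measure Z) = 0 := by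
      have : ∀ z, V z = ∑ i, lam i * U i z := fun z => by simp [V]
      simp_rw [this]
      rw [integral_finset_sum _ (fun i _ => (hint σ (U i)).const_mul _)]
      refine Finset.sum_eq_zero fun i _ => ?_
      rw [integral_const_mul, hUint]; simp [m]
    rw [hV] at hmm
    unfold QQ at h1
    linarith
  filter_upwards [Ps_spec hC hFam (ε/2) (by positivity), ev_const (Real.log 2) (ε := ε/2) (by positivity),
    eventually_gt_atTop 0] with k h1 h2 hk
  have hk' : (0:ℝ) < k := by exact_mod_cast hk
  refine le_iInf₂ fun u hu => ?_
  have h3 : ex (k * (-(s + ε))) + ex (k * (-(s + ε))) ≤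
      P {ω | emp S Y θ u k ω ∈ Γ} + ex (k * (-(s + ε))) := by
    calc ex (k * (-(s + ε))) + ex (k * (-(s + ε)))
        = ex (Real.log 2) * ex (k * (-(s + ε))) := by
          rw [← two_mul]
          congr 1
          unfold ex
          rw [Real.exp_log (by norm_num)]
          norm_num
      _ ≤ ex (k * (Ps S ν A W - ε/2)) := by
          rw [← ex_add, ex_le]
          nlinarith
      _ ≤ JJ S ν u (GG W k) := (h1 u hu).1
      _ = ∫⁻ ω, GG W k (pth S u (Y ω)) ∂P := JJ_P hC.cont hY hν u (GG_meas hFam k)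
      _ ≤ ∫⁻ ω, (({ω | emp S Y θ u k ω ∈ Γ}.indicator 1 ω : ℝ≥0∞) + ex (k * (-(s + ε)))) ∂P := by
          refine lintegral_mono fun ω => ?_
          have hSS : ∀ i, SS W k (pth S u (Y ω)) i =
              k * (sgn i.2 * C * (∫ z, i.1.1 z ∂(emp S Y θ u k ω : Measure Z) - m i.1.1)) := by
            intro i
            rw [← hUint, emp_integral (U i) u hk ω, ff_sg]
            rfl
          have hle : ∀ i, ff W k (pth S u (Y ω)) ≤ SS W k (pth S u (Y ω)) i := fun i =>
            Finset.inf'_le _ (Finset.mem_univ i)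
          by_cases hω : ω ∈ {ω | emp S Y θ u k ω ∈ Γ}
          · rw [Set.indicator_of_mem hω]
            refine le_add_right ?_
            show ex (ff W k (pth S u (Y ω))) ≤ 1
            rw [← ex_zero, ex_le]
            refine (hle (⟨0, Finset.mem_insert_self _ _⟩, true)).trans ?_
            rw [hSS]; simp [m]
          · rw [Set.indicator_of_notMem hω, zero_add]
            show ex (ff W k (pth S u (Y ω))) ≤ _
            rw [ex_le]
            have : ∃ V ∈ T, ε0 ≤ |∫ z, V z ∂(emp S Y θ u k ω : Measure Z) - m V| := by
              by_contra hcon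
              push Not at hcon
              exact hω (hT _ hcon)
            obtain ⟨V, hV, habs⟩ := this
            have key : ∃ b, sgn b * C * (∫ z, V z ∂(emp S Y θ u k ω : Measure Z) - m V) ≤ -(s + ε) := by
              have hCe : C * ε0 = s + ε := by rw [hCdef]; field_simp
              rcases le_abs.1 habs with h | h
              · refine ⟨false, ?_⟩
                simp only [hsgn]
                simp
                nlinarith
              · refine ⟨true, ?_⟩
                simp only [hsgn]
                simp
                nlinarith
            obtain ⟨b, hb⟩ := key
            refine (hle (⟨V, Finset.mem_insert_of_mem hV⟩, b)).trans ?_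
            rw [hSS]
            exact mul_le_mul_of_nonneg_left hb hk'.le
      _ ≤ P {ω | emp S Y θ u k ω ∈ Γ} + ex (k * (-(s + ε))) := by
          rw [lintegral_add_right _ measurable_const]
          simp only [lintegral_const, measure_univ, mul_one]
          gcongr
          exact lintegral_indicator_one_le _
  exact (ENNReal.add_le_add_iff_right (ex_ne_top _)).1 h3

lemma lower [IsProbabilityMeasure P] [IsProbabilityMeasure μ] [IsProbabilityMeasure ν] (hC : MC S μ ν A)
    (hY : Measurable Y) (hν : ν = P.map Y) (hθ : Continuous θ) (Γ : Set (ProbabilityMeasure Z)) :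
    -(⨅ σ ∈ interior Γ, (RR S ν A θ σ : EReal)) ≤
    Filter.liminf
        (fun k : ℕ => (((k : ℝ)⁻¹ : ℝ) : EReal) * ENNReal.log (⨅ u ∈ A, P {ω | emp S Y θ u k ω ∈ Γ})) atTop := by
  rw [EReal.neg_le]
  refine le_iInf₂ fun σ hσ => ?_
  by_cases htop : RR S ν A θ σ = ⊤
  · rw [htop]; exact le_top
  rw [EReal.neg_le]
  refine EReal.ge_of_forall_gt_iff_ge.1 fun c hc => ?_
  set s := (RR S ν A θ σ).toReal with hs
  have hs0 : 0 ≤ s := ENNReal.toReal_nonneg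
  have hRs : (RR S ν A θ σ : EReal) = (s : EReal) := by
    rw [hs]; exact (EReal.coe_toReal (by simpa using htop) (by simp)).symm.trans (by simp)
  rw [hRs] at hc
  have hc' : c < -s := by exact_mod_cast hc
  refine le_trans ?_ (le_liminf_of_ex (lower_pt hC hY hν hθ Γ σ hσ hs0 (fun V => ?_)
    (ε := -s - c) (by linarith)))
  · exact_mod_cast (by linarith : c ≤ -(s + (-s - c)))
  · have h1 : ENNReal.ofReal ((∫ x, V x ∂(σ : Measure Z)) - QQ S ν A θ V) ≤ RR S ν A θ σ :=
      le_iSup (fun V : Z →ᵇ ℝ => ENNReal.ofReal ((∫ x, V x ∂(σ : Measure Z)) - QQ S ν A θ V)) V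
    exact (ENNReal.ofReal_le_iff_le_toReal htop).1 h1

lemma unifLDP [IsProbabilityMeasure P] [IsProbabilityMeasure μ] [IsProbabilityMeasure ν] (hC : MC S μ ν A)
    (hY : Measurable Y) (hν : ν = P.map Y) (hθ : Continuous θ) :
    UnifLDPof (fun k Γ => ⨅ u ∈ A, P {ω | emp S Y θ u k ω ∈ Γ})
      (fun k Γ => ⨆ u ∈ A, P {ω | emp S Y θ u k ω ∈ Γ}) (RR S ν A θ) :=
  fun Γ => ⟨lower hC hY hν hθ Γ, upper hC hY hν hθ Γ⟩

lemma RR_good [IsProbabilityMeasure μ] [IsProbabilityMeasure ν] (hC : MC S μ ν A)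
    (hθ : Continuous θ) : GoodRate (RR S ν A θ) :=
  (goodRate_of (QQ S ν A θ) (X_comp hC hθ).1 (X_comp hC hθ).2 (QQ_nonpos hC hθ)).1

lemma ldp_pt [IsProbabilityMeasure P] [IsProbabilityMeasure μ] [IsProbabilityMeasure ν] (hC : MC S μ ν A)
    (hY : Measurable Y) (hν : ν = P.map Y) (hθ : Continuous θ) {u : H} (hu : u ∈ A) :
    LDPof (fun k F => P {ω | emp S Y θ u k ω ∈ F}) (RR S ν A θ) := by
  have hnn : ∀ k : ℕ, (0 : EReal) ≤ (((k : ℝ)⁻¹ : ℝ) : EReal) := fun k => by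
    exact_mod_cast inv_nonneg.2 (Nat.cast_nonneg k)
  constructor
  · intro F hF
    have := upper hC hY hν hθ F
    rw [hF.closure_eq] at this
    refine le_trans (limsup_le_limsup (Eventually.of_forall fun k => ?_)) this
    refine mul_le_mul_of_nonneg_left (ENNReal.log_monotone ?_) (hnn k)
    exact le_iSup₂ (f := fun u _ => P {ω | emp S Y θ u k ω ∈ F}) u hu
  · intro G hG
    have := lower hC hY hν hθ G
    rw [hG.interior_eq] at this
    refine le_trans this (liminf_le_liminf (Eventually.of_forall fun k => ?_))
    refine mul_le_mul_of_nonneg_left (ENNReal.log_monotone ?_) (hnn k)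
    exact iInf₂_le (f := fun u _ => P {ω | emp S Y θ u k ω ∈ G}) u hu

lemma QQ_tendsto [IsProbabilityMeasure P] [IsProbabilityMeasure μ] [IsProbabilityMeasure ν] (hC : MC S μ ν A)
    (hY : Measurable Y) (hν : ν = P.map Y) (V : H →ᵇ ℝ) {u : H} (hu : u ∈ A) :
    Tendsto (fun k : ℕ => (k : ℝ)⁻¹ *
            Real.log (∫ ω, Real.exp (∑ n ∈ Finset.Icc 1 k, V (pth S u (Y ω) n)) ∂P))
          atTop (𝓝 (QQ S ν A (fun x : ℕ → H => x 0) V)) := by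
  have hθ : Continuous (fun x : ℕ → H => x 0) := continuous_apply 0
  rw [Metric.tendsto_atTop']
  intro ε hε
  have hev : ∀ᶠ k : ℕ in atTop, dist ((k : ℝ)⁻¹ *
            Real.log (∫ ω, Real.exp (∑ n ∈ Finset.Icc 1 k, V (pth S u (Y ω) n)) ∂P))
          (QQ S ν A (fun x : ℕ → H => x 0) V) < ε := by
    filter_upwards [Ps_spec hC (fam_sg hθ V) (ε/4) (by positivity),
      ev_const (2*‖V‖) (ε := ε/4) (by positivity), eventually_gt_atTop 0] with k h1 h2 hk
    have hk' : (0:ℝ) < k := by exact_mod_cast hk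
    obtain ⟨h3, h4⟩ := h1 u hu
    have hsum : ∀ x : ℕ → H, |∑ n ∈ Finset.Icc 1 k, V (x n) -
        ff (sg (V ∘ fun x : ℕ → H => x 0)) k x| ≤ 2*‖V‖ := by
      intro x
      rw [ff_sg]
      have e1 : ∑ n ∈ Finset.range k, (V ∘ fun x : ℕ → H => x 0) (fun j => x (n + j)) =
        ∑ n ∈ Finset.range k, V (x n) := by simp
      have e2 : ∑ n ∈ Finset.Icc 1 k, V (x n) = ∑ n ∈ Finset.range k, V (x (n+1)) := by
        rw [Finset.range_eq_Ico, Finset.sum_Ico_add' (fun n => V (x n)) 0 k 1]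
        rfl
      rw [e1, e2]
      have e3 := Finset.sum_range_succ (fun n => V (x n)) k
      rw [Finset.sum_range_succ'] at e3
      have e4 : ∑ n ∈ Finset.range k, V (x (n+1)) - ∑ n ∈ Finset.range k, V (x n) = V (x k) - V (x 0) := by linarith
      rw [e4]
      have a1 := V.norm_coe_le_norm (x k)
      have a2 := V.norm_coe_le_norm (x 0)
      rw [Real.norm_eq_abs] at a1 a2
      have := abs_sub (V (x k)) (V (x 0))
      linarith
    set F : Ω → ℝ := fun ω => ∑ n ∈ Finset.Icc 1 k, V (pth S u (Y ω) n) with hF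
    have hFm : Measurable F := by
      refine Finset.measurable_sum _ fun n _ => V.continuous.measurable.comp ?_
      exact (measurable_pi_apply n).comp ((pth_meas hC.cont u).comp hY)
    have hJ := JJ_P hC.cont hY hν u (GG_meas (fam_sg hθ V) k)
    set Q := QQ S ν A (fun x : ℕ → H => x 0) V with hQ
    change ex (k * (Q - ε/4)) ≤ _ at h3
    change _ ≤ ex (k * (Q + ε/4)) at h4
    rw [hJ] at h3 h4
    have u1 : ∫⁻ ω, ex (F ω) ∂P ≤ ex (k * (Q + ε/2)) := by
      calc ∫⁻ ω, ex (F ω) ∂P ≤ ∫⁻ ω, ex (2*‖V‖) * GG (sg (V ∘ fun x : ℕ → H => x 0)) k (pth S u (Y ω)) ∂P := by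
            refine lintegral_mono fun ω => ?_
            have := (abs_le.1 (hsum (pth S u (Y ω)))).2
            unfold GG
            rw [← ex_add, ex_le]
            linarith
        _ = ex (2*‖V‖) * ∫⁻ ω, GG (sg (V ∘ fun x : ℕ → H => x 0)) k (pth S u (Y ω)) ∂P :=
            lintegral_const_mul' _ _ (ex_ne_top _)
        _ ≤ ex (2*‖V‖) * ex (k * (Q + ε/4)) := mul_le_mul' le_rfl h4
        _ ≤ _ := by rw [← ex_add, ex_le]; linarith
    have u2 : ex (k * (Q - ε/2)) ≤ ∫⁻ ω, ex (F ω) ∂P := by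
      calc ex (k * (Q - ε/2)) ≤ ex (-(2*‖V‖)) * ex (k * (Q - ε/4)) := by
            rw [← ex_add, ex_le]; linarith
        _ ≤ ex (-(2*‖V‖)) * ∫⁻ ω, GG (sg (V ∘ fun x : ℕ → H => x 0)) k (pth S u (Y ω)) ∂P :=
            mul_le_mul' le_rfl h3
        _ = ∫⁻ ω, ex (-(2*‖V‖)) * GG (sg (V ∘ fun x : ℕ → H => x 0)) k (pth S u (Y ω)) ∂P :=
            (lintegral_const_mul' _ _ (ex_ne_top _)).symm
        _ ≤ _ := by
            refine lintegral_mono fun ω => ?_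
            have := (abs_le.1 (hsum (pth S u (Y ω)))).1
            unfold GG
            rw [← ex_add, ex_le]
            linarith
    have hint : ∫ ω, Real.exp (F ω) ∂P = (∫⁻ ω, ex (F ω) ∂P).toReal := by
      rw [integral_eq_lintegral_of_nonneg_ae (Eventually.of_forall fun ω => (Real.exp_pos _).le)
        (Real.measurable_exp.comp hFm).aestronglyMeasurable]
      rfl
    have hne : ∫⁻ ω, ex (F ω) ∂P ≠ ⊤ := (u1.trans_lt (lt_top_iff_ne_top.2 (ex_ne_top _))).ne
    have v1 : (∫⁻ ω, ex (F ω) ∂P).toReal ≤ Real.exp (k * (Q + ε/2)) :=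
      ENNReal.toReal_le_of_le_ofReal (Real.exp_pos _).le u1
    have v2 : Real.exp (k * (Q - ε/2)) ≤ (∫⁻ ω, ex (F ω) ∂P).toReal :=
      (ENNReal.ofReal_le_iff_le_toReal hne).1 u2
    have hpos : 0 < (∫⁻ ω, ex (F ω) ∂P).toReal := (Real.exp_pos _).trans_le v2
    rw [hint]
    have w1 := (Real.log_le_iff_le_exp hpos).2 v1
    have w2 := (Real.le_log_iff_exp_le hpos).2 v2
    rw [Real.dist_eq, abs_lt]
    set l := Real.log (∫⁻ ω, ex (F ω) ∂P).toReal
    have x1 : (k:ℝ)⁻¹ * l ≤ Q + ε/2 := by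
      rw [inv_mul_le_iff₀ hk']; exact w1
    have x2 : Q - ε/2 ≤ (k:ℝ)⁻¹ * l := by
      rw [le_inv_mul_iff₀ hk']; exact w2
    constructor <;> linarith
  obtain ⟨N, hN⟩ := eventually_atTop.1 hev
  exact ⟨N, fun n hn => hN n (le_of_lt hn)⟩
end ldp2

section prob
variable [SecondCountableTopology H] [MeasurableSpace H] [BorelSpace H]
  {Ω : Type} [MeasurableSpace Ω] {P : Measure Ω}

lemma indep_seq {ι α β : Type} {f : ι → Ω → ℝ} (hf : ∀ i, Measurable (f i)) (h : iIndepFun f P)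
    (a : α → ι) (c : β → ι) (hd : ∀ i j, a i ≠ c j) :
    IndepFun (fun ω i => f (a i) ω) (fun ω j => f (c j) ω) P := by
  have h1 := indep_iSup_of_disjoint (m := fun i => MeasurableSpace.comap (f i) inferInstance)
    (fun i => (hf i).comap_le) h.iIndep (S := Set.range a) (T := Set.range c)
    (Set.disjoint_left.2 (by rintro _ ⟨i, rfl⟩ ⟨j, hj⟩; exact hd i j hj.symm))
  rw [IndepFun_iff_Indep]
  refine indep_of_indep_of_le_left (indep_of_indep_of_le_right h1 ?_) ?_
  · rw [MeasurableSpace.pi, MeasurableSpace.comap_iSup]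
    refine iSup_le fun j => ?_
    rw [MeasurableSpace.comap_comp]
    exact le_iSup₂_of_le (c j) ⟨j, rfl⟩ le_rfl
  · rw [MeasurableSpace.pi, MeasurableSpace.comap_iSup]
    refine iSup_le fun j => ?_
    rw [MeasurableSpace.comap_comp]
    exact le_iSup₂_of_le (a j) ⟨j, rfl⟩ le_rfl

/-- synthesis map -/
def FF (e : HilbertBasis ℕ ℝ H) (b : ℕ → ℝ) (x : ℕ → ℝ) : H :=
  limUnder atTop (fun N : ℕ => ∑ j ∈ Finset.range N, (b j * x j) • (e j : H))

lemma FF_meas (e : HilbertBasis ℕ ℝ H) (b : ℕ → ℝ) : Measurable (FF e b) := by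
  have : StronglyMeasurable (FF e b) := by
    unfold FF
    refine StronglyMeasurable.limUnder (l := atTop)
      (f := fun (N : ℕ) (x : ℕ → ℝ) => ∑ j ∈ Finset.range N, (b j * x j) • (e j : H)) fun N => ?_
    refine Continuous.stronglyMeasurable ?_
    fun_prop
  exact this.measurable

lemma FF_eq (e : HilbertBasis ℕ ℝ H) (b : ℕ → ℝ) (x : ℕ → ℝ) {h : H}
    (hs : HasSum (fun j => (b j * x j) • (e j : H)) h) : FF e b x = h :=
  hs.tendsto_sum_nat.limUnder_eq

variable {e : HilbertBasis ℕ ℝ H} {η : ℕ → Ω → H} {b : ℕ → ℝ} {ξ : ℕ → ℕ → Ω → ℝ}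
  {p : ℕ → ℝ → ℝ}

lemma shift_law [IsProbabilityMeasure P] (hη : ∀ k, Measurable (η k)) (hD : CondD P e η b ξ p) :
    (P.map (fun ω n => η (n+1) ω)).map (fun y : ℕ → H => (y 0, fun n => y (n + 1))) =
      (P.map (η 1)).prod (P.map (fun ω n => η (n+1) ω)) := by
  obtain ⟨hb0, hbs, hsum, hξ, hind, hlaw, -⟩ := hD
  have hF : ∀ k ω, η k ω = FF e b (fun j => ξ j k ω) := fun k ω => (FF_eq e b _ (hsum k ω)).symm
  have hY : ∀ r : ℕ, Measurable (fun ω n => η (n+r) ω) := fun r => measurable_pi_lambda _ fun n => hη _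
  -- laws agree
  have hl : ∀ r : ℕ, P.map (fun ω (q : ℕ × ℕ) => ξ q.1 (q.2 + r) ω) =
      Measure.infinitePi (fun q : ℕ × ℕ => (volume : Measure ℝ).withDensity fun x => ENNReal.ofReal (p q.1 x)) := by
    intro r
    have := (hind.precomp (g := fun q : ℕ × ℕ => (q.1, q.2 + r)) (by
      rintro ⟨a1, a2⟩ ⟨b1, b2⟩ h
      simp at h; ext <;> simp [h])).map_fun_eq_infinitePi_map (fun q => hξ _ _)
    rw [this]
    congr 1
    funext q
    exact hlaw _ _
  let G : (ℕ × ℕ → ℝ) → (ℕ → H) := fun x n => FF e b (fun j => x (j, n))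
  have hG : Measurable G := measurable_pi_lambda _ fun n =>
    (FF_meas e b).comp (measurable_pi_lambda _ fun j => measurable_pi_apply _)
  have hX : ∀ r : ℕ, Measurable (fun ω (q : ℕ × ℕ) => ξ q.1 (q.2 + r) ω) := fun r =>
    measurable_pi_lambda _ fun q => hξ _ _
  have hm : ∀ r : ℕ, P.map (fun ω n => η (n+r) ω) = (Measure.infinitePi (fun q : ℕ × ℕ =>
      (volume : Measure ℝ).withDensity fun x => ENNReal.ofReal (p q.1 x))).map G := by
    intro r
    rw [← hl r, Measure.map_map hG (hX r)]
    congr 1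
    funext ω n
    exact hF _ _
  have hind2 : IndepFun (η 1) (fun ω n => η (n+2) ω) P := by
    have h1 := indep_seq (f := fun jk : ℕ × ℕ => ξ jk.1 jk.2) (fun i => hξ _ _) hind
      (a := fun j : ℕ => (j, 1)) (c := fun q : ℕ × ℕ => (q.1, q.2 + 2)) (by
        rintro i ⟨j, k⟩ h; simp at h)
    have h2 := h1.comp (FF_meas e b) hG
    convert h2 using 1
    · funext ω; exact hF _ _
    · funext ω n; exact hF _ _
  rw [Measure.map_map (by fun_prop) (hY 1)]
  have h3 := (indepFun_iff_map_prod_eq_prod_map_map (hη 1).aemeasurable (hY 2).aemeasurable).1 hind2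
  rw [hm 2, ← hm 1] at h3
  rw [← h3]
  rfl

lemma tv_line {p : ℝ → ℝ} {L : ℝ≥0} (hL : LipschitzWith L p)
    (hsupp : Function.support p ⊆ Set.Icc (-1 : ℝ) 1) (s : ℝ) (ψ : ℝ → ℝ≥0∞) (hψ : Measurable ψ)
    (M : ℝ≥0∞) (hM : ∀ x, ψ x ≤ M) :
    ∫⁻ x, ψ x ∂((volume : Measure ℝ).withDensity fun x => ENNReal.ofReal (p x)) ≤
      ∫⁻ x, ψ (x - s) ∂((volume : Measure ℝ).withDensity fun x => ENNReal.ofReal (p x)) +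
        ENNReal.ofReal (2 * L * |s|) * M := by
  have hpm : Measurable fun x => ENNReal.ofReal (p x) := hL.continuous.measurable.ennreal_ofReal
  have h1 : ∫⁻ x, ((fun x => ENNReal.ofReal (p x)) * fun x => ψ (x - s)) x =
      ∫⁻ x, ENNReal.ofReal (p (x + s)) * ψ x := by
    rw [← lintegral_sub_right_eq_self (fun x => ENNReal.ofReal (p (x + s)) * ψ x) s]
    simp
  have key : ∀ x, ENNReal.ofReal (p x) * ψ x ≤ ENNReal.ofReal (p (x + s)) * ψ x +
      (Set.Icc (-1:ℝ) 1).indicator (fun _ => ENNReal.ofReal (L * |s|) * M) x := by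
    intro x
    by_cases hx : x ∈ Set.Icc (-1:ℝ) 1
    · rw [Set.indicator_of_mem hx]
      have hp : p x ≤ p (x + s) + L * |s| := by
        have := hL.dist_le_mul x (x + s)
        rw [Real.dist_eq, Real.dist_eq] at this
        have h2 := le_abs_self (p x - p (x + s))
        have h3 : |x - (x + s)| = |s| := by rw [← abs_neg]; congr 1; ring
        rw [h3] at this
        linarith
      calc ENNReal.ofReal (p x) * ψ x ≤ (ENNReal.ofReal (p (x+s)) + ENNReal.ofReal (L * |s|)) * ψ x := by
            refine mul_le_mul' ?_ le_rfl
            exact (ENNReal.ofReal_le_ofReal hp).trans ENNReal.ofReal_add_le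
        _ ≤ _ := by
            rw [add_mul]
            exact add_le_add le_rfl (mul_le_mul' le_rfl (hM x))
    · have : p x = 0 := by
        by_contra h0
        exact hx (hsupp h0)
      rw [this]; simp
  have hT : ∫⁻ x, ψ (x - s) ∂((volume : Measure ℝ).withDensity fun x => ENNReal.ofReal (p x)) =
    ∫⁻ x, ENNReal.ofReal (p (x + s)) * ψ x := by
    rw [← h1]
    exact lintegral_withDensity_eq_lintegral_mul _ hpm (hψ.comp (measurable_id.sub_const s))
  rw [hT, lintegral_withDensity_eq_lintegral_mul _ hpm hψ]
  calc _ ≤ ∫⁻ x, (ENNReal.ofReal (p (x + s)) * ψ x +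
      (Set.Icc (-1:ℝ) 1).indicator (fun _ => ENNReal.ofReal (L * |s|) * M) x) := lintegral_mono key
    _ = (∫⁻ x, ENNReal.ofReal (p (x + s)) * ψ x) + ENNReal.ofReal (L * |s|) * M * volume (Set.Icc (-1:ℝ) 1) := by
        rw [lintegral_add_right _ (measurable_const.indicator measurableSet_Icc),
          lintegral_indicator_const measurableSet_Icc]
    _ = _ := by
        congr 1
        rw [Real.volume_Icc, mul_right_comm, ← ENNReal.ofReal_mul (by positivity)]
        congr 2; ring

lemma tv_coord [IsProbabilityMeasure P] (hη : ∀ k, Measurable (η k)) (hD : CondD P e η b ξ p)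
    (hb : ∀ j, b j ≠ 0) (j : ℕ) : ∃ C : ℝ, 0 ≤ C ∧ ∀ (t : ℝ) (M : ℝ≥0∞) (φ : H → ℝ≥0∞),
      (∀ h, φ h ≤ M) → ∫⁻ h, φ h ∂(P.map (η 1)) ≤
        ∫⁻ h, φ (h - t • (e j : H)) ∂(P.map (η 1)) + ENNReal.ofReal (C * |t|) * M := by
  obtain ⟨hb0, hbs, hsum, hξ, hind, hlaw, hLip, hp0, hps⟩ := hD
  obtain ⟨L, hL⟩ := hLip j
  refine ⟨2 * L * |b j|⁻¹, by positivity, ?_⟩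
  intro t M φ' hφ'
  obtain ⟨φ, hφm, hφle, hφeq⟩ := exists_measurable_le_lintegral_eq (P.map (η 1)) φ'
  have hφM : ∀ h, φ h ≤ M := fun h => (hφle h).trans (hφ' h)
  rw [hφeq]
  refine le_trans ?_ (add_le_add_left (lintegral_mono fun h => hφle (h - t • (e j : H))) _)
  set ζ : Ω → H := fun ω => η 1 ω - (b j * ξ j 1 ω) • (e j : H) with hζ
  have hζm : Measurable ζ := (hη 1).sub (((hξ j 1).const_mul (b j)).smul_const _)
  have hζF : ∀ ω, ζ ω = FF e b (fun i => if i = j then 0 else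
      (fun jk : ℕ × ℕ => ξ jk.1 jk.2) (if i = j then (j, 2) else (i, 1)) ω) := by
    intro ω
    symm
    apply FF_eq
    have := (hsum 1 ω).update j 0
    convert this using 1
    · funext i
      by_cases hi : i = j
      · subst hi; simp
      · simp [hi]
    · simp [hζ]; abel
  have hind2 : IndepFun (ξ j 1) ζ P := by
    have h1 := indep_seq (f := fun jk : ℕ × ℕ => ξ jk.1 jk.2) (fun i => hξ _ _) hind
      (a := fun _ : Unit => (j, 1)) (c := fun i : ℕ => if i = j then (j, 2) else (i, 1)) (by
        rintro _ i h
        by_cases hi : i = j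
        · simp [hi] at h
        · simp [hi] at h; exact hi h.symm)
    have h2 := h1.comp (φ := fun x : Unit → ℝ => x ())
      (ψ := fun x : ℕ → ℝ => FF e b (fun i => if i = j then 0 else x i)) (measurable_pi_apply (X := fun _ : Unit => ℝ) ())
      ((FF_meas e b).comp (measurable_pi_lambda _ fun i => by
        by_cases hi : i = j
        · simp [hi]
        · simp only [hi, if_false]; exact measurable_pi_apply i))
    convert h2 using 1
    · rfl
    · funext ω
      exact hζF ω
  have h3 := (indepFun_iff_map_prod_eq_prod_map_map (hξ j 1).aemeasurable hζm.aemeasurable).1 hind2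
  have hrep : ∀ g : H → ℝ≥0∞, Measurable g → ∫⁻ h, g h ∂(P.map (η 1)) =
      ∫⁻ z, ∫⁻ x, g ((b j * x) • (e j : H) + z) ∂(P.map (ξ j 1)) ∂(P.map ζ) := by
    intro g hg
    have hmm : Measurable (fun q : ℝ × H => g ((b j * q.1) • (e j : H) + q.2)) := by
      refine hg.comp (Continuous.measurable ?_)
      fun_prop
    have := Measure.isProbabilityMeasure_map (μ := P) (hξ j 1).aemeasurable
    have := Measure.isProbabilityMeasure_map (μ := P) hζm.aemeasurable
    rw [← lintegral_prod_symm' (fun q : ℝ × H => g ((b j * q.1) • (e j : H) + q.2)) hmm, ← h3,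
      lintegral_map hmm ((hξ j 1).prodMk hζm), lintegral_map hg (hη 1)]
    simp [hζ]
  rw [hrep φ hφm, hrep (fun h => φ (h - t • (e j : H))) (hφm.comp (measurable_id.sub_const _))]
  have := Measure.isProbabilityMeasure_map (μ := P) hζm.aemeasurable
  have hsm : ∀ z, ∫⁻ x, φ ((b j * x) • (e j : H) + z) ∂(P.map (ξ j 1)) ≤
      ∫⁻ x, φ ((b j * x) • (e j : H) + z - t • (e j : H)) ∂(P.map (ξ j 1)) +
        ENNReal.ofReal (2 * L * |b j|⁻¹ * |t|) * M := by
    intro z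
    rw [hlaw j 1]
    have hψ : Measurable (fun x : ℝ => φ ((b j * x) • (e j : H) + z)) := by
      refine hφm.comp (Continuous.measurable ?_)
      fun_prop
    refine (tv_line hL (hps j) (t / b j) _ hψ M (fun x => hφM _)).trans (le_of_eq ?_)
    congr 1
    · refine lintegral_congr fun x => ?_
      congr 1
      have : b j * (x - t / b j) = b j * x - t := by
        have := hb j
        field_simp
      rw [this, sub_smul]; abel
    · congr 2
      rw [abs_div]; ring
  calc _ ≤ ∫⁻ z, (∫⁻ x, φ ((b j * x) • (e j : H) + z - t • (e j : H)) ∂(P.map (ξ j 1)) +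
        ENNReal.ofReal (2 * L * |b j|⁻¹ * |t|) * M) ∂(P.map ζ) := lintegral_mono hsm
    _ = _ := by
      rw [lintegral_add_right _ measurable_const]
      simp

lemma tv_multi [IsProbabilityMeasure P] (hη : ∀ k, Measurable (η k)) (hD : CondD P e η b ξ p)
    (hb : ∀ j, b j ≠ 0) (N : ℕ) : ∃ C : ℝ, 0 ≤ C ∧ ∀ (t : ℕ → ℝ) (r : ℝ) (M : ℝ≥0∞) (φ : H → ℝ≥0∞),
      (∀ j, |t j| ≤ r) → (∀ h, φ h ≤ M) → ∫⁻ h, φ h ∂(P.map (η 1)) ≤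
        ∫⁻ h, φ (h - ∑ j ∈ Finset.range N, t j • (e j : H)) ∂(P.map (η 1)) + ENNReal.ofReal (C * r) * M := by
  induction N with
  | zero => exact ⟨0, le_rfl, fun t r M φ _ _ => by simp⟩
  | succ N ih =>
    obtain ⟨C, hC0, hC⟩ := ih
    obtain ⟨C', hC0', hC'⟩ := tv_coord hη hD hb N
    refine ⟨C + C', by positivity, fun t r M φ ht hφ => ?_⟩
    have hr : 0 ≤ r := (abs_nonneg _).trans (ht 0)
    refine (hC t r M φ ht hφ).trans ?_
    have h2 := hC' (t N) M (fun h => φ (h - ∑ j ∈ Finset.range N, t j • (e j : H))) (fun h => hφ _)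
    refine (add_le_add_left h2 _).trans ?_
    have h3 : ∀ h : H, h - t N • (e N : H) - ∑ j ∈ Finset.range N, t j • (e j : H) =
        h - ∑ j ∈ Finset.range (N+1), t j • (e j : H) := by
      intro h; rw [Finset.sum_range_succ]; abel
    simp only [h3]
    rw [add_assoc]
    refine add_le_add_right ?_ _
    rw [← add_mul, ← ENNReal.ofReal_add (by positivity) (by positivity)]
    refine mul_le_mul' (ENNReal.ofReal_le_ofReal ?_) le_rfl
    have := mul_le_mul_of_nonneg_left (ht N) hC0'
    linarith
end prob

section zero
variable [SecondCountableTopology H] [MeasurableSpace H] [BorelSpace H]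
  {Ω : Type} [MeasurableSpace Ω] {P : Measure Ω}
  {e : HilbertBasis ℕ ℝ H} {η : ℕ → Ω → H} {b : ℕ → ℝ} {ξ : ℕ → ℕ → Ω → ℝ}
  {p : ℕ → ℝ → ℝ}

lemma normsq (e : HilbertBasis ℕ ℝ H) {x : ℕ → ℝ} {h : H} (hs : HasSum (fun j => x j • (e j : H)) h) :
    HasSum (fun j => x j ^ 2) (‖h‖ ^ 2) := by
  have h1 : ∀ i, inner ℝ (e i : H) h = x i := by
    intro i
    have h2 := hs.mapL (innerSL ℝ (e i : H))
    have h3 : HasSum (fun j => innerSL ℝ (e i : H) (x j • (e j : H))) (x i) := by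
      have h4 := hasSum_single (f := fun j => innerSL ℝ (e i : H) (x j • (e j : H))) i (by
        intro j hj
        simp [inner_smul_right, e.orthonormal.inner_eq_zero hj.symm])
      convert h4 using 1
      simp [inner_smul_right, e.orthonormal.norm_eq_one]
    exact h2.unique h3
  have h5 := e.hasSum_inner_mul_inner h h
  rw [real_inner_self_eq_norm_sq] at h5
  have h6 : (fun j => x j ^ 2) = fun i => inner ℝ h (e i : H) * inner ℝ (e i : H) h := by
    funext i
    rw [real_inner_comm (e i : H) h, h1]; ring
  rw [h6]
  exact h5

lemma zero_mem [IsProbabilityMeasure P] (hη : ∀ k, Measurable (η k)) (hD : CondD P e η b ξ p) :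
    (0 : H) ∈ msupp (P.map (η 1)) := by
  obtain ⟨hb0, hbs, hsum, hξ, hind, hlaw, hLip, hp0, hps⟩ := hD
  intro U hU
  obtain ⟨ε, hε, hball⟩ := Metric.mem_nhds_iff.1 hU
  refine lt_of_lt_of_le ?_ (measure_mono hball)
  rw [Measure.map_apply (hη 1) measurableSet_ball]
  set B := ∑' j, b j ^ 2 with hB
  have hBs : HasSum (fun j => b j ^ 2) B := hbs.hasSum
  have hB0 : 0 ≤ B := tsum_nonneg fun j => sq_nonneg _
  obtain ⟨N, hN⟩ : ∃ N : ℕ, B - ε^2/2 < ∑ j ∈ Finset.range N, b j ^ 2 :=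
    (hBs.tendsto_sum_nat.eventually (lt_mem_nhds (by
      have : 0 < ε^2 := by positivity
      linarith))).exists
  obtain ⟨δ, hδ, hδB⟩ : ∃ δ : ℝ, 0 < δ ∧ δ^2 * B < ε^2/2 := by
    refine ⟨ε / (2 * Real.sqrt (B + 1)), by positivity, ?_⟩
    rw [div_pow, mul_pow, Real.sq_sqrt (by positivity), div_mul_eq_mul_div,
      div_lt_div_iff₀ (by positivity) (by positivity)]
    have : 0 < ε^2 := by positivity
    nlinarith
  set E : Set Ω := ⋂ i ∈ (Finset.range N).image (fun j => (j, 1)),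
    (fun jk : ℕ × ℕ => ξ jk.1 jk.2) i ⁻¹' Metric.ball 0 δ with hE
  have hEpos : 0 < P E := by
    rw [hE, hind.meas_biInter (fun i _ => ⟨_, measurableSet_ball, rfl⟩)]
    rw [pos_iff_ne_zero, Finset.prod_ne_zero_iff]
    rintro ⟨j, k⟩ -
    rw [← Measure.map_apply (hξ j k) measurableSet_ball, hlaw, withDensity_apply _ measurableSet_ball,
      ← pos_iff_ne_zero]
    obtain ⟨L, hL⟩ := hLip j
    have hm : Measurable fun x => ENNReal.ofReal (p j x) := hL.continuous.measurable.ennreal_ofReal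
    rw [setLIntegral_pos_iff hm]
    have hset : Function.support (fun x => ENNReal.ofReal (p j x)) = p j ⁻¹' Set.Ioi 0 := by
      ext x; simp
    rw [hset]
    refine IsOpen.measure_pos _ ((isOpen_Ioi.preimage hL.continuous).inter Metric.isOpen_ball) ?_
    exact ⟨0, hp0 j, Metric.mem_ball_self hδ⟩
  have hae : ∀ᵐ ω ∂P, ∀ j, |ξ j 1 ω| ≤ 1 := by
    rw [ae_all_iff]
    intro j
    have h1 : ∀ᵐ x ∂(P.map (ξ j 1)), |x| ≤ 1 := by
      rw [hlaw]
      obtain ⟨L, hL⟩ := hLip j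
      rw [ae_withDensity_iff hL.continuous.measurable.ennreal_ofReal]
      refine Eventually.of_forall fun x hx => ?_
      have : p j x ≠ 0 := by
        intro h0; rw [h0] at hx; simp at hx
      exact abs_le.2 (hps j this)
    exact ae_of_ae_map (hξ j 1).aemeasurable h1
  refine hEpos.trans_le (measure_mono_ae ?_)
  filter_upwards [hae] with ω hω hωE
  have hωE : ω ∈ E := hωE
  have hsm : ∀ j < N, |ξ j 1 ω| < δ := by
    intro j hj
    rw [hE, Set.mem_iInter₂] at hωE
    have := hωE (j, 1) (Finset.mem_image_of_mem _ (Finset.mem_range.2 hj))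
    simpa using this
  show η 1 ω ∈ Metric.ball 0 ε
  rw [mem_ball_zero_iff]
  have hn := normsq e (hsum 1 ω)
  have hfin : HasSum (fun j => if j ∈ Finset.range N then b j ^ 2 else 0) (∑ j ∈ Finset.range N, b j ^ 2) := by
    have := hasSum_sum_of_ne_finset_zero (L := SummationFilter.unconditional ℕ) (f := fun j => if j ∈ Finset.range N then b j ^ 2 else 0)
      (s := Finset.range N) (by intro j hj; simp only [hj, if_false])
    convert this using 1
    exact Finset.sum_congr rfl fun j hj => by simp only [hj, if_true]
  have hcmp := (hBs.mul_left (δ^2)).add (hBs.sub hfin)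
  have hle := hasSum_le (fun j => ?_) hn hcmp
  · have : ‖η 1 ω‖^2 < ε^2 := by linarith
    exact lt_of_pow_lt_pow_left₀ 2 hε.le this
  · have hb2 := sq_nonneg (b j)
    have hx2 : ξ j 1 ω ^ 2 ≤ 1 := by
      rw [sq_le_one_iff_abs_le_one]; exact hω j
    by_cases hj : j ∈ Finset.range N
    · simp only [hj, if_true]
      have hx3 : ξ j 1 ω ^ 2 ≤ δ ^ 2 := sq_le_sq' (by linarith [(abs_lt.1 (hsm j (Finset.mem_range.1 hj))).1])
        (abs_lt.1 (hsm j (Finset.mem_range.1 hj))).2.le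
      rw [mul_pow]
      nlinarith
    · simp only [hj, if_false]
      rw [mul_pow]
      have : 0 ≤ δ^2 * b j^2 := by positivity
      nlinarith

lemma S_zero {S : H → H} (hA : CondA S) : S 0 = 0 := by
  have ht : Tendsto (fun n : ℕ => S^[n] 0) atTop (𝓝 0) := by
    rw [Metric.tendsto_atTop]
    intro ε hε
    obtain ⟨C, -, a, ha0, ha1, n₀, -, -, h⟩ := hA.2 ε (ε/2) (by positivity) (by linarith)
    refine ⟨n₀, fun n hn => ?_⟩
    have := h 0 (Metric.mem_closedBall_self hε.le) n hn
    rw [dist_zero_right]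
    simp only [norm_zero, mul_zero] at this
    rw [max_eq_right (by positivity)] at this
    linarith
  have h1 : Tendsto (fun n : ℕ => S^[n+1] 0) atTop (𝓝 0) := (tendsto_add_atTop_iff_nat 1).2 ht
  have h2 : Tendsto (fun n : ℕ => S (S^[n] 0)) atTop (𝓝 (S 0)) := (hA.1.continuous.tendsto 0).comp ht
  simp only [Function.iterate_succ_apply'] at h1
  exact tendsto_nhds_unique h2 h1

lemma S_small {S : H → H} (hA : CondA S) (v : H) {r : ℝ} (hr : 0 < r) : ∃ n, ‖S^[n] v‖ ≤ r := by
  set R := ‖v‖ + r + 1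
  have hvR : 0 ≤ ‖v‖ := norm_nonneg v
  obtain ⟨C, -, a, ha0, ha1, n₀, -, -, h⟩ := hA.2 R r hr (by simp only [R]; linarith)
  have hm : ∀ m : ℕ, ‖S^[m * n₀] v‖ ≤ max (a^m * ‖v‖) r := by
    intro m
    induction m with
    | zero => simp
    | succ m ih =>
      have ham : a^m ≤ 1 := pow_le_one₀ ha0.le ha1.le
      have hin : S^[m * n₀] v ∈ Metric.closedBall (0:H) R := by
        rw [mem_closedBall_zero_iff]
        refine ih.trans (max_le ?_ ?_)
        · simp only [R]; nlinarith
        · simp only [R]; linarith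
      have h2 := h _ hin n₀ le_rfl
      rw [← Function.iterate_add_apply] at h2
      have e1 : (m+1) * n₀ = n₀ + m * n₀ := by ring
      rw [e1]
      refine h2.trans (max_le ?_ (le_max_right _ _))
      have := mul_le_mul_of_nonneg_left ih ha0.le
      refine this.trans ?_
      rw [mul_max_of_nonneg _ _ ha0.le]
      refine max_le ?_ ?_
      · refine le_trans (le_of_eq ?_) (le_max_left _ _); ring
      · refine le_trans ?_ (le_max_right _ _); nlinarith
  have ht : Tendsto (fun m : ℕ => a^m * ‖v‖) atTop (𝓝 0) := by
    simpa using (tendsto_pow_atTop_nhds_zero_of_lt_one ha0.le ha1).mul_const ‖v‖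
  obtain ⟨m, hm2⟩ := (ht.eventually (gt_mem_nhds hr)).exists
  exact ⟨m * n₀, (hm m).trans (max_le hm2.le le_rfl)⟩

lemma reach_snoc {S : H → H} {μ : Measure H} {h : H} (hh : h ∈ msupp μ) (n : ℕ) :
    ∀ v w, Reach S μ n v w → Reach S μ (n+1) v (S w + h) := by
  induction n with
  | zero =>
    intro v w hvw
    have hvw : v = w := hvw
    subst hvw
    exact ⟨h, hh, rfl⟩
  | succ n ih =>
    rintro v w ⟨k, hk, hr⟩
    exact ⟨k, hk, ih _ _ hr⟩

lemma reach_trans {S : H → H} {μ : Measure H} {m : ℕ} {w x : H} (hx : Reach S μ m w x) (n : ℕ) :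
    ∀ v, Reach S μ n v w → Reach S μ (n+m) v x := by
  induction n with
  | zero =>
    intro v hvw
    have hvw : v = w := hvw
    subst hvw
    rwa [Nat.zero_add]
  | succ n ih =>
    rintro v ⟨k, hk, hr⟩
    rw [Nat.add_right_comm]
    exact ⟨k, hk, ih _ hr⟩

lemma reach_iter {S : H → H} {μ : Measure H} (h0 : (0:H) ∈ msupp μ) (v : H) (n : ℕ) :
    Reach S μ n v (S^[n] v) := by
  induction n with
  | zero => rfl
  | succ n ih =>
    have := reach_snoc h0 n _ _ ih
    rwa [add_zero, ← Function.iterate_succ_apply' S] at this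

lemma reach_attain {S : H → H} (hS : Continuous S) {μ : Measure H} (m : ℕ) :
    ∀ x ∈ attain S (msupp μ) {0} m, ∀ δ : ℝ, 0 < δ → ∃ ζ : ℝ, 0 < ζ ∧ ∀ v : H, ‖v‖ < ζ →
      ∃ w, Reach S μ m v w ∧ ‖w - x‖ < δ := by
  induction m with
  | zero =>
    intro x hx δ hδ
    have hx : x = 0 := hx
    exact ⟨δ, hδ, fun v hv => ⟨v, rfl, by rw [hx, sub_zero]; exact hv⟩⟩
  | succ m ih =>
    intro x hx δ hδ
    obtain ⟨_, ⟨y, hy, rfl⟩, h, hh, rfl⟩ := hx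
    obtain ⟨δ', hδ', hcont⟩ := Metric.continuous_iff.1 hS y δ hδ
    obtain ⟨ζ, hζ, H1⟩ := ih y hy δ' hδ'
    refine ⟨ζ, hζ, fun v hv => ?_⟩
    obtain ⟨w, hw, hwy⟩ := H1 v hv
    refine ⟨S w + h, reach_snoc hh m _ _ hw, ?_⟩
    have := hcont w (by rw [dist_eq_norm]; exact hwy)
    rw [dist_eq_norm] at this
    simpa using this

lemma tb_SA {S : H → H} (hS0 : S 0 = 0) (hC : CondC S e) {ρ : ℝ} (hρ : 0 < ρ) {Cl : ℝ}
    (hl : ∀ u ∈ Metric.closedBall (0:H) ρ, ‖S u‖ ≤ Cl) :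
    TotallyBounded (S '' Metric.closedBall 0 ρ) := by
  rw [Metric.totallyBounded_iff]
  intro ε hε
  obtain ⟨γ, -, -, hγ, h⟩ := hC ρ hρ
  obtain ⟨N, hN⟩ := (hγ.eventually (gt_mem_nhds (show (0:ℝ) < ε / (2 * ρ) by positivity))).exists
  let g : (ℕ → ℝ) → H := fun c => ∑ j ∈ Finset.range N, c j • (e j : H)
  have hg : Continuous g := by
    refine continuous_finsetSum _ fun j _ => ?_
    exact (continuous_apply j).smul continuous_const
  have hcomp : IsCompact (g '' (Set.univ.pi fun _ => Set.Icc (-Cl) Cl)) :=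
    (isCompact_univ_pi fun _ => isCompact_Icc).image hg
  obtain ⟨t, ht, htc⟩ := Metric.totallyBounded_iff.1 hcomp.totallyBounded (ε/2) (by positivity)
  refine ⟨t, ht, ?_⟩
  rintro _ ⟨u, hu, rfl⟩
  have h1 := h N u hu 0 (Metric.mem_closedBall_self hρ.le)
  rw [hS0, sub_zero, sub_zero] at h1
  have h2 : projB e N (S u) ∈ g '' (Set.univ.pi fun _ => Set.Icc (-Cl) Cl) := by
    refine ⟨fun j => e.repr (S u) j, fun j _ => ?_, rfl⟩
    rw [← abs_le.trans Set.mem_Icc.symm, ← Real.norm_eq_abs]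
    refine (lp.norm_apply_le_norm (by norm_num) _ j).trans ?_
    rw [LinearIsometryEquiv.norm_map]
    exact hl u hu
  have h3 := htc h2
  rw [Set.mem_iUnion₂] at h3 ⊢
  obtain ⟨y, hy, hyb⟩ := h3
  refine ⟨y, hy, ?_⟩
  rw [Metric.mem_ball, dist_eq_norm] at hyb ⊢
  have hun : ‖u‖ ≤ ρ := mem_closedBall_zero_iff.1 hu
  have h4 : γ N * ‖u‖ ≤ ε/2 := by
    rw [lt_div_iff₀ (by positivity)] at hN
    by_cases hg0 : 0 ≤ γ N
    · nlinarith
    · push Not at hg0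
      nlinarith [norm_nonneg u]
  calc ‖S u - y‖ = ‖(S u - projB e N (S u)) + (projB e N (S u) - y)‖ := by congr 1; abel
    _ ≤ _ := norm_add_le _ _
    _ < ε := by linarith
end zero

section model
variable [SecondCountableTopology H] [MeasurableSpace H] [BorelSpace H]
  {Ω : Type} [MeasurableSpace Ω] {P : Measure Ω}
  {e : HilbertBasis ℕ ℝ H} {η : ℕ → Ω → H} {b : ℕ → ℝ} {ξ : ℕ → ℕ → Ω → ℝ}
  {p : ℕ → ℝ → ℝ}

lemma model_MC [IsProbabilityMeasure P] {S : H → H} (hη : ∀ k, Measurable (η k))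
    {K : Set H} (hK : K = msupp (Measure.map (η 1) P)) (hKcomp : IsCompact K)
    (hA : CondA S) (hB : CondB S K) (hC : CondC S e) (hD : CondD P e η b ξ p)
    (hb : ∀ j, b j ≠ 0) :
    MC S (P.map (η 1)) (P.map (fun ω n => η (n+1) ω)) (attainDom S K ({0} : Set H)) := by
  have hS : Continuous S := hA.1.continuous
  have hS0 : S 0 = 0 := S_zero hA
  have h0K : (0:H) ∈ K := by rw [hK]; exact zero_mem hη hD
  set T : Set H := ⋃ n, attain S K ({0} : Set H) n with hT
  have hAT : attainDom S K ({0} : Set H) = closure T := rfl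
  have hmono : ∀ n, attain S K ({0} : Set H) n ⊆ attain S K ({0} : Set H) (n+1) := by
    intro n
    induction n with
    | zero =>
      intro x hx
      have hx : x = 0 := hx
      subst hx
      exact ⟨0, ⟨0, rfl, hS0⟩, 0, h0K, add_zero 0⟩
    | succ n ih => exact Set.add_subset_add (Set.image_mono ih) le_rfl
  have hmono' : Monotone (attain S K ({0} : Set H)) := monotone_nat_of_le_succ hmono
  have hTS : T ⊆ S '' T + K := by
    intro x hx
    obtain ⟨n, hn⟩ := Set.mem_iUnion.1 hx
    exact Set.add_subset_add (Set.image_mono (Set.subset_iUnion _ n)) le_rfl (hmono n hn)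
  have hTinv : ∀ u ∈ T, ∀ h ∈ K, S u + h ∈ T := by
    intro u hu h hh
    obtain ⟨n, hn⟩ := Set.mem_iUnion.1 hu
    exact Set.mem_iUnion.2 ⟨n+1, ⟨S u, ⟨u, hn, rfl⟩, h, hh, rfl⟩⟩
  obtain ⟨ρ, hρ, k₀, -, hk⟩ := hB
  have hTρ : T ⊆ Metric.closedBall 0 ρ := by
    refine Set.iUnion_subset fun n => ?_
    have h1 := hk 0 le_rfl (max n (k₀ 0)) (le_max_right _ _)
    rw [Metric.closedBall_zero] at h1
    exact (hmono' (le_max_left n (k₀ 0))).trans h1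
  have hAρ : attainDom S K ({0} : Set H) ⊆ Metric.closedBall 0 ρ :=
    closure_minimal hTρ Metric.isClosed_closedBall
  obtain ⟨Cl, hCl0, -, -, -, -, -, hLip, -⟩ := hA.2 ρ (ρ/2) (by positivity) (by linarith)
  have hcompact : IsCompact (attainDom S K ({0} : Set H)) := by
    have htb : TotallyBounded (S '' Metric.closedBall 0 ρ) := by
      refine tb_SA hS0 hC hρ (Cl := Cl * ρ) fun u hu => ?_
      have := hLip u hu 0 (Metric.mem_closedBall_self hρ.le)
      rw [hS0, sub_zero, sub_zero] at this
      exact this.trans (mul_le_mul_of_nonneg_left (mem_closedBall_zero_iff.1 hu) hCl0.le)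
    have hcc : IsCompact (closure (S '' Metric.closedBall 0 ρ) + K) :=
      (htb.closure.isCompact_of_isClosed isClosed_closure).add hKcomp
    refine hcc.of_isClosed_subset isClosed_closure (closure_minimal ?_ hcc.isClosed)
    exact hTS.trans (Set.add_subset_add ((Set.image_mono hTρ).trans subset_closure) le_rfl)
  refine ⟨hS, hcompact, ?_, shift_law hη hD, ?_, ?_, ?_⟩
  · exact ⟨0, subset_closure (Set.mem_iUnion.2 ⟨0, rfl⟩)⟩
  · intro u hu
    have hae : ∀ᵐ h ∂(P.map (η 1)), h ∈ (P.map (η 1)).support := Measure.support_mem_ae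
    filter_upwards [hae] with h hh
    have hhK : h ∈ K := by
      rw [hK]
      exact (Measure.mem_support_iff_forall h).1 hh
    exact map_mem_closure (f := fun u => S u + h) (by fun_prop) hu fun x hx => hTinv x hx h hhK
  · intro q hq
    obtain ⟨γ, -, -, hγ, hsq⟩ := hC ρ hρ
    obtain ⟨N, hN⟩ := (hγ.eventually (gt_mem_nhds hq)).exists
    obtain ⟨C, hC0, hCt⟩ := tv_multi hη hD hb N
    refine ⟨C * Cl, by positivity, fun u hu u' hu' => ⟨projB e N (S u - S u'), ?_, ?_⟩⟩
    · have := hsq N u (hAρ hu) u' (hAρ hu')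
      have e1 : S u - projB e N (S u - S u') - S u' = S u - S u' - projB e N (S u - S u') := by abel
      rw [e1]
      exact this.trans (mul_le_mul_of_nonneg_right hN.le (norm_nonneg _))
    · intro M φ hφ
      have := hCt (fun j => e.repr (S u - S u') j) (Cl * ‖u - u'‖) M φ (fun j => ?_) hφ
      · rw [mul_assoc]; exact this
      · rw [← Real.norm_eq_abs]
        refine (lp.norm_apply_le_norm (by norm_num) _ j).trans ?_
        rw [LinearIsometryEquiv.norm_map]
        exact hLip u (hAρ hu) u' (hAρ hu')
  · intro v hv u hu δ hδ
    obtain ⟨x, hx, hux⟩ := Metric.mem_closure_iff.1 hu (δ/2) (by positivity)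
    obtain ⟨m, hm⟩ := Set.mem_iUnion.1 hx
    rw [hK] at hm
    obtain ⟨ζ, hζ, hr⟩ := reach_attain hS m x hm (δ/2) (by positivity)
    obtain ⟨n, hn⟩ := S_small hA v (r := ζ/2) (by positivity)
    obtain ⟨w, hw, hwx⟩ := hr (S^[n] v) (by linarith)
    refine ⟨n + m, w, reach_trans hw n v (reach_iter (by rw [← hK]; exact h0K) v n), ?_⟩
    rw [dist_comm, dist_eq_norm] at hux
    calc ‖w - u‖ = ‖(w - x) + (x - u)‖ := by congr 1; abel
      _ ≤ _ := norm_add_le _ _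
      _ < δ := by linarith

lemma traj_pth (S : H → H) (η : ℕ → Ω → H) (u : H) (ω : Ω) (n : ℕ) :
    traj S η (fun _ => u) n ω = pth S u (fun n => η (n+1) ω) n := by
  induction n with
  | zero => rfl
  | succ n ih =>
    show S (traj S η (fun _ => u) n ω) + η (n+1) ω = _
    rw [ih]; rfl

lemma emp_zero (S : H → H) (Y : Ω → ℕ → H) (u : H) (k : ℕ) (ω : Ω) :
    emp S Y (fun x : ℕ → H => x 0) u k ω = occ (fun n => pth S u (Y ω) n) k := rfl

lemma emp_id (S : H → H) (Y : Ω → ℕ → H) (u : H) (k : ℕ) (ω : Ω) :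
    emp S Y id u k ω = occ (fun n (j : ℕ) => pth S u (Y ω) (n + j)) k := rfl
end model
/-- **Theorem 1.4 (uniform LDP)**: under Conditions (A)–(D) with `b_j ≠ 0`, the occupation
measures `ζ_k(u)` of the trajectories issued from deterministic points `u ∈ 𝒜`, and the
corresponding process-level occupation measures `𝜻_k(u)` on `𝐇 = H^{ℤ₊}`, satisfy the
uniform LDP with the good rate functions `I` and `𝐈` of the non-uniform LDPs. -/
theorem statement5
    {H : Type} [NormedAddCommGroup H] [InnerProductSpace ℝ H] [CompleteSpace H]
    [SecondCountableTopology H] [MeasurableSpace H] [BorelSpace H]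
    {Ω : Type} [MeasurableSpace Ω] (P : Measure Ω) [IsProbabilityMeasure P]
    (S : H → H) (e : HilbertBasis ℕ ℝ H)
    (η : ℕ → Ω → H) (hηmeas : ∀ k, Measurable (η k))
    (b : ℕ → ℝ) (ξ : ℕ → ℕ → Ω → ℝ) (p : ℕ → ℝ → ℝ)
    (K : Set H) (hK : K = msupp (Measure.map (η 1) P)) (hKcomp : IsCompact K)
    (hA : CondA S) (hB : CondB S K) (hC : CondC S e) (hD : CondD P e η b ξ p)
    (hb : ∀ j, b j ≠ 0) :
    -- uniform LDP for the occupation measures `ζ_k(u)` with the rate function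
    -- `I(σ) = sup_V (⟨V,σ⟩ - Q(V))`, `Q(V) = lim_k k⁻¹ log 𝔼_u exp(∑_{n=1}^k V(u_n))`
    (∃ Q : (H →ᵇ ℝ) → ℝ,
      (∀ V : H →ᵇ ℝ, ∀ u ∈ attainDom S K ({0} : Set H),
        Tendsto (fun k : ℕ => (k : ℝ)⁻¹ *
            Real.log (∫ ω,
              Real.exp (∑ n ∈ Finset.Icc 1 k, V (traj S η (fun _ => u) n ω)) ∂P))
          atTop (𝓝 (Q V))) ∧
      GoodRate (fun σ : ProbabilityMeasure H =>
        ⨆ V : H →ᵇ ℝ, ENNReal.ofReal ((∫ x, V x ∂(σ : Measure H)) - Q V)) ∧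
      UnifLDPof
        (fun k Γ => ⨅ u ∈ attainDom S K ({0} : Set H),
          P {ω | occ (fun n => traj S η (fun _ => u) n ω) k ∈ Γ})
        (fun k Γ => ⨆ u ∈ attainDom S K ({0} : Set H),
          P {ω | occ (fun n => traj S η (fun _ => u) n ω) k ∈ Γ})
        (fun σ : ProbabilityMeasure H =>
          ⨆ V : H →ᵇ ℝ, ENNReal.ofReal ((∫ x, V x ∂(σ : Measure H)) - Q V))) ∧
    -- uniform LDP for the process-level occupation measures `𝜻_k(u)` with the good rate
    -- function `𝐈` of the process-level LDP
    ∃ I : ProbabilityMeasure (ℕ → H) → ℝ≥0∞,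
      GoodRate I ∧
      (∀ u ∈ attainDom S K ({0} : Set H),
        LDPof
          (fun k F =>
            P {ω | occ (fun n (j : ℕ) => traj S η (fun _ => u) (n + j) ω) k ∈ F}) I) ∧
      UnifLDPof
        (fun k Γ => ⨅ u ∈ attainDom S K ({0} : Set H),
          P {ω | occ (fun n (j : ℕ) => traj S η (fun _ => u) (n + j) ω) k ∈ Γ})
        (fun k Γ => ⨆ u ∈ attainDom S K ({0} : Set H),
          P {ω | occ (fun n (j : ℕ) => traj S η (fun _ => u) (n + j) ω) k ∈ Γ})
        I := by
  have hM := model_MC hηmeas hK hKcomp hA hB hC hD hb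
  have hY : Measurable (fun ω n => η (n+1) ω) := measurable_pi_lambda _ fun n => hηmeas _
  have := Measure.isProbabilityMeasure_map (μ := P) (hηmeas 1).aemeasurable
  have := Measure.isProbabilityMeasure_map (μ := P) hY.aemeasurable
  have hθ : Continuous (fun x : ℕ → H => x 0) := continuous_apply 0
  refine ⟨⟨QQ S (P.map (fun ω n => η (n+1) ω)) (attainDom S K {0}) (fun x : ℕ → H => x 0),
    fun V u hu => ?_, RR_good hM hθ, ?_⟩,
    RR S (P.map (fun ω n => η (n+1) ω)) (attainDom S K {0}) id, RR_good hM continuous_id,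
    fun u hu => ?_, ?_⟩
  · simp only [traj_pth]
    exact QQ_tendsto hM hY rfl V hu
  · have h := unifLDP hM hY rfl hθ
    simp only [emp_zero] at h
    simp only [traj_pth]
    exact h
  · have h := ldp_pt hM hY rfl continuous_id hu
    simp only [emp_id] at h
    simp only [traj_pth]
    exact h
  · have h := unifLDP hM hY rfl continuous_id
    simp only [emp_id] at h
    simp only [traj_pth]
    exact h
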